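/- arXiv:0909.1965 — 2 statements merged into one kernel-verified Lean document; each statement's English description precedes it below -/
import Mathlib

section
/- The section series G(t;x,0) = Σ_{n≥0} (Σ_{i≥0} g(n;i,0) xⁱ) tⁿ and G(t;0,y) = Σ_{n≥0} (Σ_{j≥0} g(n;0,j) yʲ) tⁿ, regarded as formal power series in two variables over ℚ, are both algebraic: there exist nonzero polynomials P₁(T,t,x) ∈ ℚ[T,t,x] and P₂(T,t,y) ∈ ℚ[T,t,y] with P₁(G(t;x,0), t, x) = 0 and P₂(G(t;0,y), t, y) = 0. -/
/-!
Cutting off the last step of a walk gives the functional equation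
`(xy - t (1 + y)(1 + x²y)) G(t;x,y) = xy - t G(t;x,0) - t (1 + y) G(t;0,y) + t G(t;0,0)`
(`functional_equation_mon`). The kernel on the left vanishes on the curve `t = τ(x, y)`, where
`τ = xy / ((1 + y)(1 + x²y))`, and there the equation only involves the sections
(`kernel_equation`):
`τ (G(τ;x,0) + (1 + y) G(τ;0,y) - G(τ;0,0)) = xy`.
This equation, together with the fact that both sections become `G(t;0,0)` when `x` or `y` is set
to `0`, determines the sections (`eq_zero_of_kernel_eq_zero`). Indeed `τ` is divisible by `x` and
by `y`, so that a homogeneous solution is divisible by `t`, and its quotient by `t` is again a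
homogeneous solution.

It remains to exhibit an algebraic solution. With `q = t²`, let `z`, `w`, `v` be the power series
which Hensel's lemma (`hensel`) yields as roots of the polynomials `pz`, `pw` and `pv`, and put
`Z = 1 + q z`, `U = 1 + q w`, `V = q v`. Then `Z` is algebraic over `ℚ(t)` by
`256 t² Z⁶ = (Z² - 1)(Z² + 3)³`, while `x` is a rational function of `t`, `Z`, `U`, and `y` is a
rational function of `Z`, `V`. The series `As`, `Bs` and `Cs`, which are rational in these, are the
candidates for `t² G(t;x,0)`, `t² G(t;0,y)` and `t² G(t;0,0)`.

To see that they satisfy the kernel equation, substitute `t = τ(x, y)` everywhere. Eliminating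
`τ`, `x` and `y` leaves one polynomial relation between `Z`, `U` and `V`, and this relation factors
as `curve Z U V * spur Z U V * spur (-Z) U V = 0` (`elimination`). The two spurious factors have
nonzero leading terms (`spur_ne_zero`, `spur_neg_ne_zero`), so `curve Z U V = 0`
(`kernel_elimination`). After clearing denominators the kernel equation is a multiple of
`curve Z U V` (`cofactor`), so it holds (`kernel_algebraic`). By uniqueness the candidates are the
sections (`sections_eq`), and they are algebraic, because the algebraic power series form a ring
that contains the roots of nonzero polynomials with algebraic coefficients
(`mem_algSeries_of_root`).
-/

noncomputable section

/-- The set of admissible steps for Gessel walks. -/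
def gesselSteps : Set (ℤ × ℤ) := {(1, 0), (-1, 0), (1, 1), (-1, -1)}

/-- The position of the walk `w` after its first `k` steps. -/
def walkPos {n : ℕ} (w : Fin n → ℤ × ℤ) (k : ℕ) : ℤ × ℤ :=
  ∑ m ∈ Finset.univ.filter (fun m : Fin n => (m : ℕ) < k), w m

/-- `w` is a Gessel walk: every step is admissible and the walk (which starts at
the origin) never leaves the first quadrant. -/
def IsGesselWalk {n : ℕ} (w : Fin n → ℤ × ℤ) : Prop :=
  (∀ m, w m ∈ gesselSteps) ∧ ∀ k ≤ n, 0 ≤ (walkPos w k).1 ∧ 0 ≤ (walkPos w k).2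

/-- The number of Gessel walks of length `n` ending at `(i, j)`. -/
def g (n : ℕ) (i j : ℤ) : ℕ :=
  Nat.card {w : Fin n → ℤ × ℤ // IsGesselWalk w ∧ walkPos w n = (i, j)}

/-- The section `G(t;x,0)` of the complete generating function of Gessel walks,
as a formal power series in the two variables `t = 0`, `x = 1`: the coefficient
of `t^n x^i` is `g(n;i,0)`. -/
def GesselGFx0 : MvPowerSeries (Fin 2) ℚ := fun e => (g (e 0) (e 1) 0 : ℚ)

/-- The section `G(t;0,y)` of the complete generating function of Gessel walks,
as a formal power series in the two variables `t = 0`, `y = 1`: the coefficient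
of `t^n y^j` is `g(n;0,j)`. -/
def GesselGF0y : MvPowerSeries (Fin 2) ℚ := fun e => (g (e 0) 0 (e 1) : ℚ)

namespace Gessel

/-! ### Counting walks by their last step -/

/-- The four Gessel steps, enumerated. -/
def step : Fin 4 → ℤ × ℤ := ![(1, 0), (-1, 0), (1, 1), (-1, -1)]

lemma step_injective : Function.Injective step := by decide

lemma mem_gesselSteps_iff (s : ℤ × ℤ) : s ∈ gesselSteps ↔ ∃ k, step k = s := by
  constructor
  · rintro (h | h | h | h)
    · exact ⟨0, h.symm⟩
    · exact ⟨1, h.symm⟩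
    · exact ⟨2, h.symm⟩
    · exact ⟨3, h.symm⟩
  · rintro ⟨k, rfl⟩
    fin_cases k <;> simp [step, gesselSteps]

lemma walkPos_snoc {n : ℕ} (w : Fin n → ℤ × ℤ) (s : ℤ × ℤ) {k : ℕ} (hk : k ≤ n) :
    walkPos (Fin.snoc w s : Fin (n + 1) → ℤ × ℤ) k = walkPos w k := by
  unfold walkPos
  rw [Finset.sum_filter, Finset.sum_filter, Fin.sum_univ_castSucc]
  simp [Nat.not_lt.mpr hk]

lemma walkPos_snoc_last {n : ℕ} (w : Fin n → ℤ × ℤ) (s : ℤ × ℤ) :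
    walkPos (Fin.snoc w s : Fin (n + 1) → ℤ × ℤ) (n + 1) = walkPos w n + s := by
  unfold walkPos
  rw [Finset.sum_filter, Finset.sum_filter, Fin.sum_univ_castSucc]
  simp only [Fin.val_castSucc, Fin.snoc_castSucc, Fin.val_last, Fin.snoc_last]
  congr 1
  · refine Finset.sum_congr rfl fun i _ => ?_
    rw [if_pos (by omega), if_pos i.2]
  · simp

/-- The walks of length `n` that `g n` counts at the endpoint `p`. -/
abbrev Walks (n : ℕ) (p : ℤ × ℤ) : Type :=
  {w : Fin n → ℤ × ℤ // IsGesselWalk w ∧ walkPos w n = p}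

instance (n : ℕ) (p : ℤ × ℤ) : Finite (Walks n p) := by
  have : Finite gesselSteps := by
    unfold gesselSteps
    exact Set.toFinite _
  refine Finite.of_injective
    (fun w : Walks n p => (fun m => ⟨w.1 m, w.2.1.1 m⟩ : Fin n → gesselSteps)) ?_
  intro w w' h
  ext1
  funext m
  exact congrArg Subtype.val (congrFun h m)

lemma isGesselWalk_snoc {n : ℕ} (w : Fin n → ℤ × ℤ) (s : ℤ × ℤ) :
    IsGesselWalk (Fin.snoc w s : Fin (n + 1) → ℤ × ℤ) ↔
      IsGesselWalk w ∧ s ∈ gesselSteps ∧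
        0 ≤ (walkPos w n + s).1 ∧ 0 ≤ (walkPos w n + s).2 := by
  constructor
  · rintro ⟨h1, h2⟩
    refine ⟨⟨fun m => by simpa using h1 m.castSucc, fun k hk => ?_⟩,
      by simpa using h1 (Fin.last n), ?_⟩
    · have := h2 k (by omega)
      rwa [walkPos_snoc w s hk] at this
    · have := h2 (n + 1) le_rfl
      rwa [walkPos_snoc_last] at this
  · rintro ⟨⟨h1, h2⟩, hs, h3⟩
    refine ⟨fun m => ?_, fun k hk => ?_⟩
    · refine Fin.lastCases ?_ (fun i => ?_) m
      · simpa using hs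
      · simpa using h1 i
    · rcases Nat.lt_or_ge n k with h | h
      · obtain rfl : k = n + 1 := by omega
        rwa [walkPos_snoc_last]
      · rw [walkPos_snoc w s h]
        exact h2 k h

/-- Removing the last step of a walk. -/
def lastStepEquiv (n : ℕ) (p : ℤ × ℤ) (h1 : 0 ≤ p.1) (h2 : 0 ≤ p.2) :
    (Σ k : Fin 4, Walks n (p - step k)) ≃ Walks (n + 1) p :=
  Equiv.ofBijective
    (fun a => ⟨Fin.snoc a.2.1 (step a.1), by
      have e : walkPos a.2.1 n + step a.1 = p := by rw [a.2.2.2]; abel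
      refine ⟨(isGesselWalk_snoc _ _).2
        ⟨a.2.2.1, (mem_gesselSteps_iff _).2 ⟨_, rfl⟩, ?_⟩, ?_⟩
      · rw [e]; exact ⟨h1, h2⟩
      · rw [walkPos_snoc_last, e]⟩) <| by
    constructor
    · rintro ⟨k, w⟩ ⟨k', w'⟩ h
      have h' := congrArg Subtype.val h
      simp only at h'
      have e1 : step k = step k' := by
        have := congrFun h' (Fin.last n)
        simpa using this
      obtain rfl := step_injective e1
      congr 1
      ext1
      funext i
      have := congrFun h' i.castSucc
      simpa using this
    · rintro ⟨w, hw, hp⟩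
      obtain ⟨w₀, s, rfl⟩ : ∃ (w₀ : Fin n → ℤ × ℤ) (s : ℤ × ℤ), w = Fin.snoc w₀ s :=
        ⟨Fin.init w, w (Fin.last n), (Fin.snoc_init_self w).symm⟩
      obtain ⟨hw0, hs, -⟩ := (isGesselWalk_snoc _ _).1 hw
      obtain ⟨k, rfl⟩ := (mem_gesselSteps_iff _).1 hs
      rw [walkPos_snoc_last] at hp
      exact ⟨⟨k, w₀, hw0, by rw [← hp]; abel⟩, rfl⟩

/-- A walk of length `n + 1` is a walk of length `n` followed by one of the four steps. -/
lemma g_succ (n : ℕ) (i j : ℤ) (hi : 0 ≤ i) (hj : 0 ≤ j) :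
    g (n + 1) i j =
      g n (i - 1) j + g n (i + 1) j + g n (i - 1) (j - 1) + g n (i + 1) (j + 1) := by
  have h := Nat.card_congr (lastStepEquiv n (i, j) hi hj)
  rw [Nat.card_sigma, Fin.sum_univ_four] at h
  unfold g
  rw [← h]
  simp [step]

lemma g_eq_zero (n : ℕ) (i j : ℤ) (h : i < 0 ∨ j < 0) : g n i j = 0 := by
  unfold g
  have : IsEmpty {w : Fin n → ℤ × ℤ // IsGesselWalk w ∧ walkPos w n = (i, j)} := by
    constructor
    rintro ⟨w, hw, hp⟩
    have := hw.2 n le_rfl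
    rw [hp] at this
    simp only at this
    omega
  exact Nat.card_of_isEmpty

lemma g_zero (i j : ℤ) : g 0 i j = if i = 0 ∧ j = 0 then 1 else 0 := by
  have key : ∀ w : Fin 0 → ℤ × ℤ, ∀ k, walkPos w k = 0 := by
    intro w k
    simp [walkPos]
  split_ifs with h
  · obtain ⟨rfl, rfl⟩ := h
    unfold g
    rw [Nat.card_eq_one_iff_unique]
    refine ⟨⟨fun a b => Subtype.ext (Subsingleton.elim _ _)⟩,
      ⟨⟨Fin.elim0, ⟨fun m => m.elim0, fun k _ => ?_⟩, ?_⟩⟩⟩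
    · simp [key]
    · rw [key]; rfl
  · unfold g
    have : IsEmpty {w : Fin 0 → ℤ × ℤ // IsGesselWalk w ∧ walkPos w 0 = (i, j)} := by
      constructor
      rintro ⟨w, -, hp⟩
      rw [key] at hp
      simp only [Prod.ext_iff, Prod.fst_zero, Prod.snd_zero] at hp
      exact h ⟨hp.1.symm, hp.2.symm⟩
    exact Nat.card_of_isEmpty

/-! ### The functional equation -/

/-- Power series in two variables. -/
abbrev S2 := MvPowerSeries (Fin 2) ℚ

/-- Power series in the three variables `t, x, y`. -/
abbrev S3 := MvPowerSeries (Fin 3) ℚ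

/-- The exponent vector `(a, b)`. -/
def pt2 (a b : ℕ) : Fin 2 →₀ ℕ := Finsupp.equivFunOnFinite.symm ![a, b]

/-- The exponent vector `(a, b, c)`. -/
def pt3 (a b c : ℕ) : Fin 3 →₀ ℕ := Finsupp.equivFunOnFinite.symm ![a, b, c]

@[simp] lemma pt2_zero (a b : ℕ) : pt2 a b 0 = a := rfl
@[simp] lemma pt2_one (a b : ℕ) : pt2 a b 1 = b := rfl
@[simp] lemma pt3_zero (a b c : ℕ) : pt3 a b c 0 = a := rfl
@[simp] lemma pt3_one (a b c : ℕ) : pt3 a b c 1 = b := rfl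
@[simp] lemma pt3_two (a b c : ℕ) : pt3 a b c 2 = c := rfl

lemma eq_pt2 (e : Fin 2 →₀ ℕ) : e = pt2 (e 0) (e 1) := by
  ext i; fin_cases i <;> rfl

lemma eq_pt3 (e : Fin 3 →₀ ℕ) : e = pt3 (e 0) (e 1) (e 2) := by
  ext i; fin_cases i <;> rfl

lemma pt3_le (a b c : ℕ) (e : Fin 3 →₀ ℕ) :
    pt3 a b c ≤ e ↔ a ≤ e 0 ∧ b ≤ e 1 ∧ c ≤ e 2 := by
  rw [Finsupp.le_def, Fin.forall_fin_succ, Fin.forall_fin_two]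
  rfl

lemma pt3_sub (a b c a' b' c' : ℕ) :
    pt3 a b c - pt3 a' b' c' = pt3 (a - a') (b - b') (c - c') := by
  ext i; fin_cases i <;> simp [pt3]

/-- The monomial `t ^ a * x ^ b * y ^ c`. -/
def mon (a b c : ℕ) : S3 := MvPowerSeries.monomial (pt3 a b c) 1

lemma mon_eq (a b c : ℕ) :
    mon a b c = MvPowerSeries.X 0 ^ a * MvPowerSeries.X 1 ^ b * MvPowerSeries.X 2 ^ c := by
  unfold mon
  rw [MvPowerSeries.X_pow_eq, MvPowerSeries.X_pow_eq, MvPowerSeries.X_pow_eq,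
    MvPowerSeries.monomial_mul_monomial, MvPowerSeries.monomial_mul_monomial]
  congr 1
  · congr 1
    ext i; fin_cases i <;> simp [pt3]
  · norm_num

lemma coeff_mon_mul (a b c n i j : ℕ) (F : S3) :
    MvPowerSeries.coeff (pt3 n i j) (mon a b c * F) =
      if a ≤ n ∧ b ≤ i ∧ c ≤ j then
        MvPowerSeries.coeff (pt3 (n - a) (i - b) (j - c)) F else 0 := by
  unfold mon
  rw [MvPowerSeries.coeff_monomial_mul]
  simp only [pt3_le, pt3_zero, pt3_one, pt3_two, one_mul, pt3_sub]

/-- The complete generating function of Gessel walks in `t, x, y`. -/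
def GQ : S3 := fun e => (g (e 0) (e 1) (e 2) : ℚ)

/-- The generating function of Gessel excursions, in the first of two variables. -/
def G00 : S2 := fun e => if e 1 = 0 then (g (e 0) 0 0 : ℚ) else 0

/-- The inclusion of the variables `t, x` into `t, x, y`. -/
def embx : Fin 2 ↪ Fin 3 := ⟨![0, 1], by decide⟩

/-- The inclusion of the variables `t, y` into `t, x, y`. -/
def emby : Fin 2 ↪ Fin 3 := ⟨![0, 2], by decide⟩

lemma coeff_rename_embx (f : S2) (n i j : ℕ) :
    MvPowerSeries.coeff (pt3 n i j) (MvPowerSeries.rename embx f) =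
      if j = 0 then MvPowerSeries.coeff (pt2 n i) f else 0 := by
  split_ifs with h
  · subst h
    rw [← MvPowerSeries.coeff_embDomain_rename embx]
    congr 2
    ext k
    fin_cases k
    · exact (Finsupp.embDomain_apply_self embx (pt2 n i) 0).symm
    · exact (Finsupp.embDomain_apply_self embx (pt2 n i) 1).symm
    · refine (Finsupp.embDomain_of_notMem_range embx (pt2 n i) 2 ?_).symm
      decide
  · apply MvPowerSeries.coeff_rename_eq_zero
    rintro ⟨e, he⟩
    apply h
    have : (pt3 n i j) 2 = 0 := by
      rw [← he]
      exact Finsupp.mapDomain_of_notMem_range e 2 (by decide)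
    simpa using this

lemma coeff_rename_emby (f : S2) (n i j : ℕ) :
    MvPowerSeries.coeff (pt3 n i j) (MvPowerSeries.rename emby f) =
      if i = 0 then MvPowerSeries.coeff (pt2 n j) f else 0 := by
  split_ifs with h
  · subst h
    rw [← MvPowerSeries.coeff_embDomain_rename emby]
    congr 2
    ext k
    fin_cases k
    · exact (Finsupp.embDomain_apply_self emby (pt2 n j) 0).symm
    · refine (Finsupp.embDomain_of_notMem_range emby (pt2 n j) 1 ?_).symm
      decide
    · exact (Finsupp.embDomain_apply_self emby (pt2 n j) 1).symm
  · apply MvPowerSeries.coeff_rename_eq_zero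
    rintro ⟨e, he⟩
    apply h
    have : (pt3 n i j) 1 = 0 := by
      rw [← he]
      exact Finsupp.mapDomain_of_notMem_range e 1 (by decide)
    simpa using this

lemma coeff_GQ (n i j : ℕ) : MvPowerSeries.coeff (pt3 n i j) GQ = (g n i j : ℚ) := rfl
lemma coeff_GFx0 (n i : ℕ) : MvPowerSeries.coeff (pt2 n i) GesselGFx0 = (g n i 0 : ℚ) := rfl
lemma coeff_GF0y (n j : ℕ) : MvPowerSeries.coeff (pt2 n j) GesselGF0y = (g n 0 j : ℚ) := rfl
lemma coeff_G00 (n i : ℕ) :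
    MvPowerSeries.coeff (pt2 n i) G00 = if i = 0 then (g n 0 0 : ℚ) else 0 := rfl

/-- The functional equation
`(xy - t (1 + y)(1 + x²y)) G(t;x,y) = xy - t G(t;x,0) - t (1 + y) G(t;0,y) + t G(t;0,0)`,
with all terms on the side where they have positive sign. -/
lemma functional_equation_mon :
    mon 0 1 1 * GQ + mon 1 0 0 * MvPowerSeries.rename embx GesselGFx0
        + mon 1 0 0 * MvPowerSeries.rename emby GesselGF0y
        + mon 1 0 1 * MvPowerSeries.rename emby GesselGF0y =
      mon 0 1 1 * 1 + mon 1 2 1 * GQ + mon 1 0 1 * GQ + mon 1 2 2 * GQ + mon 1 0 0 * GQ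
        + mon 1 0 0 * MvPowerSeries.rename embx G00 := by
  ext e
  rw [eq_pt3 e]
  generalize e 0 = n
  generalize e 1 = i
  generalize e 2 = j
  have h1 : ∀ n i j : ℕ, MvPowerSeries.coeff (pt3 n i j) (1 : S3) =
      if n = 0 ∧ i = 0 ∧ j = 0 then 1 else 0 := by
    intro n i j
    rw [MvPowerSeries.coeff_one]
    congr 1
    rw [eq_iff_iff]
    constructor
    · intro h
      exact ⟨DFunLike.congr_fun h 0, DFunLike.congr_fun h 1, DFunLike.congr_fun h 2⟩
    · rintro ⟨rfl, rfl, rfl⟩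
      ext k; fin_cases k <;> rfl
  simp only [map_add, coeff_mon_mul, coeff_rename_embx, coeff_rename_emby, coeff_GQ,
    coeff_GFx0, coeff_GF0y, coeff_G00, h1]
  rcases n with _ | n
  · rcases i with _ | i
    · simp
    · rcases j with _ | j
      · simp
      · simp [g_zero]
  · rcases i with _ | i
    · rcases j with _ | j
      · simp
      · simp
        ring
    · rcases j with _ | j
      · simp
      · have := g_succ n i j (by positivity) (by positivity)
        simp only [Nat.le_add_left, and_self, if_true, Nat.add_sub_cancel,
          Nat.sub_zero, this]
        rcases i with _ | i
        · rcases j with _ | j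
          · simp [g_eq_zero]
          · simp [g_eq_zero]
        · rcases j with _ | j
          · simp [g_eq_zero]
          · simp

/-! ### Substitutions and the curve `K = 0` -/

open MvPowerSeries in
lemma hasSubst_pair {a b : S2} (ha : constantCoeff a = 0) (hb : constantCoeff b = 0) :
    HasSubst ![a, b] := by
  apply hasSubst_of_constantCoeff_zero
  intro s
  fin_cases s
  · exact ha
  · exact hb

/-- The substitution `f(X₀, X₁) ↦ f(a, b)`, for `a` and `b` without constant term. -/
def ev (a b : S2) (ha : MvPowerSeries.constantCoeff a = 0)
    (hb : MvPowerSeries.constantCoeff b = 0) : S2 →ₐ[ℚ] S2 :=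
  MvPowerSeries.substAlgHom (hasSubst_pair ha hb)

section ev

open MvPowerSeries

variable {a b : S2} (ha : constantCoeff a = 0) (hb : constantCoeff b = 0)

lemma ev_apply (f : S2) : ev a b ha hb f = subst ![a, b] f := substAlgHom_apply _ f

@[simp] lemma ev_X0 : ev a b ha hb (X 0) = a := substAlgHom_X _ 0

@[simp] lemma ev_X1 : ev a b ha hb (X 1) = b := substAlgHom_X _ 1

@[simp] lemma ev_C (r : ℚ) : ev a b ha hb (C r) = C r := by
  have h : (C r : S2) = algebraMap ℚ S2 r := by rw [MvPowerSeries.algebraMap_apply]; rfl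
  rw [h]
  exact (ev a b ha hb).commutes r

@[simp] lemma constantCoeff_ev (f : S2) : constantCoeff (ev a b ha hb f) = constantCoeff f := by
  have h : constantCoeff (ev a b ha hb (f - C (constantCoeff f))) = 0 := by
    rw [ev_apply]
    refine constantCoeff_subst_eq_zero (hasSubst_pair ha hb) (fun i => ?_) (by simp)
    fin_cases i
    · exact ha
    · exact hb
  rw [map_sub, map_sub, ev_C, constantCoeff_C, sub_eq_zero] at h
  exact h

lemma ev_ev {c d : S2} (hc : constantCoeff c = 0) (hd : constantCoeff d = 0) (f : S2) :
    ev c d hc hd (ev a b ha hb f) =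
      ev (ev c d hc hd a) (ev c d hc hd b) (by simpa) (by simpa) f := by
  rw [ev_apply, ev_apply, ev_apply,
    subst_comp_subst_apply (hasSubst_pair ha hb) (hasSubst_pair hc hd)]
  congr 1
  funext i
  fin_cases i
  · exact (ev_apply hc hd a).symm
  · exact (ev_apply hc hd b).symm

lemma ev_zero_zero (f : S2) :
    ev 0 0 (map_zero _) (map_zero _) f = C (constantCoeff f) := by
  rw [ev_apply]
  have : (![0, 0] : Fin 2 → S2) = 0 := by
    funext i; fin_cases i <;> rfl
  rw [this, subst_zero_eq_C_constantCoeff]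
  rfl

lemma coeff_ev (f : S2) (e : Fin 2 →₀ ℕ) :
    coeff e (ev a b ha hb f) =
      ∑ᶠ d : Fin 2 →₀ ℕ, coeff d f * coeff e (a ^ d 0 * b ^ d 1) := by
  rw [ev_apply, coeff_subst (hasSubst_pair ha hb)]
  congr 1
  funext d
  rw [smul_eq_mul, Finsupp.prod_fintype _ _ (by simp), Fin.prod_univ_two]
  rfl

/-- A series `f` with `f(0, Xᵢ) = 0` is divisible by its first variable. -/
lemma X0_dvd_of_ev_eq_zero (i : Fin 2) (f : S2)
    (h : ev 0 (X i) (map_zero _) (constantCoeff_X i) f = 0) : X 0 ∣ f := by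
  rw [X_dvd_iff]
  intro m hm
  have h2 := congrArg (coeff (Finsupp.single i (m 1))) h
  rw [coeff_ev, map_zero, finsum_eq_single _ m] at h2
  · rw [hm, pow_zero, one_mul, coeff_X_pow, if_pos rfl, mul_one] at h2
    exact h2
  · intro d hd
    by_cases h0 : d 0 = 0
    · rw [h0, pow_zero, one_mul, coeff_X_pow, if_neg, mul_zero]
      intro h3
      apply hd
      have h4 : m 1 = d 1 := Finsupp.single_injective i h3
      rw [eq_pt2 d, eq_pt2 m, h0, hm, h4]
    · rw [zero_pow h0, zero_mul, map_zero, mul_zero]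

lemma coeff_ev_X0_zero (f : S2) (n i : ℕ) :
    coeff (pt2 n i) (ev (X 0) 0 (constantCoeff_X 0) (map_zero _) f) =
      if i = 0 then coeff (pt2 n 0) f else 0 := by
  have hX : ∀ k : ℕ, coeff (pt2 n i) (X 0 ^ k : S2) = if k = n ∧ i = 0 then 1 else 0 := by
    intro k
    rw [coeff_X_pow]
    congr 1
    rw [eq_iff_iff]
    constructor
    · intro h
      have h0 := DFunLike.congr_fun h 0
      have h1 := DFunLike.congr_fun h 1
      simp at h0 h1
      exact ⟨h0.symm, h1⟩
    · rintro ⟨rfl, rfl⟩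
      ext j; fin_cases j <;> simp
  rw [coeff_ev, finsum_eq_single _ (pt2 n 0)]
  · simp [hX]
  · intro d hd
    by_cases h1 : d 1 = 0
    · rw [h1, pow_zero, mul_one, hX, if_neg, mul_zero]
      rintro ⟨h, -⟩
      apply hd
      rw [eq_pt2 d, h1, h]
    · rw [zero_pow h1, mul_zero, map_zero, mul_zero]

lemma ev_GFx0 : ev (X 0) 0 (constantCoeff_X 0) (map_zero _) GesselGFx0 = G00 := by
  ext e
  rw [eq_pt2 e, coeff_ev_X0_zero, coeff_G00, coeff_GFx0]
  simp

lemma ev_GF0y : ev (X 0) 0 (constantCoeff_X 0) (map_zero _) GesselGF0y = G00 := by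
  ext e
  rw [eq_pt2 e, coeff_ev_X0_zero, coeff_G00, coeff_GF0y]
  simp

end ev

open MvPowerSeries

/-- The power series `τ(x, y) = xy / ((1 + y)(1 + x²y))`. The kernel of the functional
equation vanishes exactly on `t = τ(x, y)`. Here `x = X 0` and `y = X 1`. -/
def tau : S2 := X 0 * (X 1 * ((1 + X 1) * (1 + X 0 ^ 2 * X 1))⁻¹)

lemma tau_spec : tau * ((1 + X 1) * (1 + X 0 ^ 2 * X 1)) = X 0 * X 1 := by
  have h : constantCoeff ((1 + X 1) * (1 + X 0 ^ 2 * X 1) : S2) ≠ 0 := by simp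
  have := MvPowerSeries.inv_mul_cancel _ h
  unfold tau
  linear_combination (X 0 * X 1 : S2) * this

lemma constantCoeff_tau : constantCoeff tau = 0 := by simp [tau]

lemma X_ne_zero (i : Fin 2) : (X i : S2) ≠ 0 := by
  intro h
  simpa using congrArg (coeff (Finsupp.single i 1)) h

lemma tau_ne_zero : tau ≠ 0 := by
  intro h
  have := tau_spec
  rw [h, zero_mul] at this
  exact mul_ne_zero (X_ne_zero 0) (X_ne_zero 1) this.symm

/-- Substitution `(t, x) ↦ (τ, x)`. -/
def evx : S2 →ₐ[ℚ] S2 := ev tau (X 0) constantCoeff_tau (constantCoeff_X 0)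
/-- Substitution `(t, y) ↦ (τ, y)`. -/
def evy : S2 →ₐ[ℚ] S2 := ev tau (X 1) constantCoeff_tau (constantCoeff_X 1)
/-- Substitution `t ↦ τ`, killing the second variable. -/
def evc : S2 →ₐ[ℚ] S2 := ev tau 0 constantCoeff_tau (map_zero _)
/-- Setting the second variable to `0`. -/
def ev0 : S2 →ₐ[ℚ] S2 := ev (X 0) 0 (constantCoeff_X 0) (map_zero _)

lemma hasSubst_three : HasSubst (![tau, X 0, X 1] : Fin 3 → S2) := by
  apply hasSubst_of_constantCoeff_zero
  intro s
  fin_cases s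
  · exact constantCoeff_tau
  · exact constantCoeff_X 0
  · exact constantCoeff_X 1

/-- Substitution `(t, x, y) ↦ (τ, x, y)`. -/
def ev3 : S3 →ₐ[ℚ] S2 := substAlgHom hasSubst_three

lemma ev3_rename_embx (f : S2) : ev3 (rename embx f) = evx f := by
  rw [ev3, substAlgHom_apply, rename_eq_subst,
    subst_comp_subst_apply (HasSubst.X_comp embx) hasSubst_three, evx, ev_apply]
  congr 1
  funext i
  rw [Function.comp_apply, subst_X hasSubst_three]
  fin_cases i <;> rfl

lemma ev3_rename_emby (f : S2) : ev3 (rename emby f) = evy f := by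
  rw [ev3, substAlgHom_apply, rename_eq_subst,
    subst_comp_subst_apply (HasSubst.X_comp emby) hasSubst_three, evy, ev_apply]
  congr 1
  funext i
  rw [Function.comp_apply, subst_X hasSubst_three]
  fin_cases i <;> rfl

/-- As `ev0` sets `x = 0`, substituting `(τ, x)` afterwards only sees `t ↦ τ`. -/
lemma evx_ev0 (f : S2) : evx (ev0 f) = evc f := by
  simp only [evx, ev0, evc, ev_ev, ev_X0, map_zero]

lemma evy_ev0 (f : S2) : evy (ev0 f) = evc f := by
  simp only [evy, ev0, evc, ev_ev, ev_X0, map_zero]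

/-- The functional equation of Gessel walks on the curve where the kernel vanishes. -/
lemma kernel_equation :
    tau * (evx GesselGFx0 + (1 + X 1) * evy GesselGF0y - evc GesselGFx0) = X 0 * X 1 := by
  have h := congrArg ev3 functional_equation_mon
  have e0 : ev3 (X 0) = tau := substAlgHom_X hasSubst_three 0
  have e1 : ev3 (X 1) = X 0 := substAlgHom_X hasSubst_three 1
  have e2 : ev3 (X 2) = X 1 := substAlgHom_X hasSubst_three 2
  have eG : evx G00 = evc GesselGFx0 := by rw [← evx_ev0, ev0, ev_GFx0]
  simp only [map_add, map_mul, map_pow, mon_eq, ev3_rename_embx, ev3_rename_emby, e0, e1, e2,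
    map_one, eG] at h
  linear_combination h + ev3 GQ * tau_spec

/-- A homogeneous solution of the kernel equation is divisible by `t`: since `τ` is divisible by
both `x` and `y`, setting `x = 0` or `y = 0` in the equation sets `t = 0` in `b` or `a`. -/
lemma descent_step (a b : S2) (h0 : ev0 a = ev0 b)
    (h : evx a + (1 + X 1) * evy b - evc a = 0) : X 0 ∣ a ∧ X 0 ∣ b := by
  have hc : constantCoeff a = constantCoeff b := by
    simpa [ev0] using congrArg constantCoeff h0
  have hy : ev 0 (X 1) (map_zero _) (constantCoeff_X 1) b = 0 := by
    have h1 := congrArg (ev 0 (X 1) (map_zero _) (constantCoeff_X 1)) h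
    simp only [map_add, map_mul, map_sub, map_one, evx, evy, evc, ev_ev, tau, ev_X0, ev_X1,
      zero_mul, map_zero, ev_zero_zero] at h1
    have h2 : (1 + X 1 : S2) ≠ 0 := by
      intro h3
      simpa using congrArg constantCoeff h3
    have h4 : (1 + X 1) * ev 0 (X 1) (map_zero _) (constantCoeff_X 1) b = 0 := by
      linear_combination h1
    exact (mul_eq_zero.1 h4).resolve_left h2
  have hb : constantCoeff b = 0 := by
    simpa using congrArg constantCoeff hy
  have hx : ev 0 (X 0) (map_zero _) (constantCoeff_X 0) a = 0 := by
    have h1 := congrArg (ev (X 0) 0 (constantCoeff_X 0) (map_zero _)) h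
    simp only [map_add, map_mul, map_sub, map_one, evx, evy, evc, ev_ev, tau, ev_X0, ev_X1,
      mul_zero, zero_mul, map_zero, ev_zero_zero, hc, hb] at h1
    simpa using h1
  exact ⟨X0_dvd_of_ev_eq_zero 0 a hx, X0_dvd_of_ev_eq_zero 1 b hy⟩

/-- The quotient of a homogeneous solution by `t` is again a homogeneous solution. -/
lemma descent (n : ℕ) : ∀ a b : S2, ev0 a = ev0 b →
    evx a + (1 + X 1) * evy b - evc a = 0 → X 0 ^ n ∣ a ∧ X 0 ^ n ∣ b := by
  induction n with
  | zero => intro a b _ _; simp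
  | succ n ih =>
    intro a b h0 h
    obtain ⟨⟨a', rfl⟩, ⟨b', rfl⟩⟩ := descent_step a b h0 h
    have e : ev0 (X 0) = X 0 := by simp [ev0]
    have ex : evx (X 0) = tau := by simp [evx]
    have ey : evy (X 0) = tau := by simp [evy]
    have ec : evc (X 0) = tau := by simp [evc]
    rw [map_mul, map_mul, e] at h0
    rw [map_mul, map_mul, map_mul, ex, ey, ec] at h
    obtain ⟨h1, h2⟩ := ih a' b' (mul_left_cancel₀ (X_ne_zero 0) h0)
      (mul_left_cancel₀ tau_ne_zero (by rw [mul_zero, ← h]; ring))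
    rw [pow_succ']
    exact ⟨mul_dvd_mul_left _ h1, mul_dvd_mul_left _ h2⟩

lemma eq_zero_of_X_pow_dvd (a : S2) (h : ∀ n, X 0 ^ n ∣ a) : a = 0 := by
  ext m
  exact (X_pow_dvd_iff.1 (h (m 0 + 1))) m (Nat.lt_succ_self _)

/-- The kernel equation has at most one solution whose two components agree when `x` and `y` are
set to `0`: a homogeneous solution vanishes, since it is divisible by every power of `t`. -/
lemma eq_zero_of_kernel_eq_zero (a b : S2) (h0 : ev0 a = ev0 b)
    (h : evx a + (1 + X 1) * evy b - evc a = 0) : a = 0 ∧ b = 0 :=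
  ⟨eq_zero_of_X_pow_dvd a fun n => (descent n a b h0 h).1,
    eq_zero_of_X_pow_dvd b fun n => (descent n a b h0 h).2⟩

/-! ### Implicit functions -/

section hensel

/-- A series without constant term is the sum of a multiple of `X 0`, formed by its monomials
that involve `X 0`, and a multiple of `X 1`. -/
lemma mem_span_X {f : S2} (h : constantCoeff f = 0) :
    f ∈ (Ideal.span (Set.range X) : Ideal S2) := by
  let a : S2 := fun e => if e 0 = 0 then 0 else coeff e f
  have ca : ∀ e, coeff e a = if e 0 = 0 then 0 else coeff e f := fun e => rfl
  have h0 : X 0 ∣ a := by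
    rw [X_dvd_iff]
    intro m hm
    rw [ca, if_pos hm]
  have h1 : X 1 ∣ f - a := by
    rw [X_dvd_iff]
    intro m hm
    rw [map_sub, ca]
    split_ifs with hm0
    · have : m = 0 := by
        ext i; fin_cases i
        · exact hm0
        · exact hm
      rw [this, sub_zero]
      exact h
    · exact sub_self _
  have hX : ∀ i, (X i : S2) ∈ (Ideal.span (Set.range X) : Ideal S2) :=
    fun i => Ideal.subset_span ⟨i, rfl⟩
  have : f = a + (f - a) := by ring
  rw [this]
  exact Ideal.add_mem _ (Ideal.mem_of_dvd _ h0 (hX 0)) (Ideal.mem_of_dvd _ h1 (hX 1))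

lemma constantCoeff_of_mem_span_X {f : S2} (h : f ∈ (Ideal.span (Set.range X) : Ideal S2)) :
    constantCoeff f = 0 := by
  have : (Ideal.span (Set.range X) : Ideal S2) ≤ RingHom.ker constantCoeff := by
    rw [Ideal.span_le]
    rintro _ ⟨i, rfl⟩
    simp
  exact this h

lemma constantCoeff_eval (f : Polynomial S2) {u v : S2} (h : constantCoeff u = constantCoeff v) :
    constantCoeff (f.eval u) = constantCoeff (f.eval v) := by
  rw [← Polynomial.eval₂_at_apply, ← Polynomial.eval₂_at_apply, h]

/-- Hensel's lemma for power series; unlike in `HenselianRing`, `f` need not be monic. The root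
is the limit of the iteration `b ↦ b - f(b) / c`, where `c` is the constant term of `f'(a)`. -/
lemma hensel (f : Polynomial S2) (a : ℚ) (h0 : constantCoeff (f.eval (MvPowerSeries.C a)) = 0)
    (h1 : constantCoeff (f.derivative.eval (MvPowerSeries.C a)) ≠ 0) :
    ∃ u, f.eval u = 0 ∧ constantCoeff u = a := by
  set I : Ideal S2 := Ideal.span (Set.range X) with hI
  set c : ℚ := (constantCoeff (f.derivative.eval (MvPowerSeries.C a)))⁻¹ with hc
  let b : ℕ → S2 := fun n => Nat.recOn n (MvPowerSeries.C a)
    fun _ b => b - f.eval b * MvPowerSeries.C c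
  have hb0 : b 0 = MvPowerSeries.C a := rfl
  have hb : ∀ n, b (n + 1) = b n - f.eval (b n) * MvPowerSeries.C c := fun n => rfl
  have hba : ∀ n, constantCoeff (b n) = a := by
    intro n
    induction n with
    | zero => simp [hb0]
    | succ n ih =>
      have h2 : constantCoeff (f.eval (b n)) = 0 := by
        rw [constantCoeff_eval f (v := MvPowerSeries.C a) (by simp [ih]), h0]
      rw [hb, map_sub, ih, map_mul, h2, zero_mul, sub_zero]
  have hfI : ∀ n, f.eval (b n) ∈ I ^ (n + 1) := by
    intro n
    induction n with
    | zero =>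
      rw [zero_add, pow_one, hb0]
      exact mem_span_X h0
    | succ n ih =>
      obtain ⟨k, hk⟩ := f.binomExpansion (b n) (-(f.eval (b n) * MvPowerSeries.C c))
      have h2 : f.eval (b (n + 1)) = f.eval (b n) *
          (1 - f.derivative.eval (b n) * MvPowerSeries.C c
            + k * MvPowerSeries.C c ^ 2 * f.eval (b n)) := by
        rw [hb, sub_eq_add_neg, hk]
        ring
      rw [h2, pow_succ]
      refine Ideal.mul_mem_mul ih (mem_span_X ?_)
      have h3 := constantCoeff_of_mem_span_X (Ideal.pow_le_self (Nat.succ_ne_zero n) ih)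
      rw [map_add, map_sub, map_mul, map_mul, h3,
        constantCoeff_eval _ (v := MvPowerSeries.C a) (by simp [hba]), map_one,
        constantCoeff_C, hc, mul_inv_cancel₀ h1]
      ring
  have aux : ∀ {m n : ℕ}, m ≤ n → b m ≡ b n [SMOD (I ^ m • ⊤ : Ideal S2)] := by
    intro m n hmn
    rw [← Ideal.one_eq_top, Ideal.smul_eq_mul, mul_one]
    obtain ⟨k, rfl⟩ := Nat.exists_eq_add_of_le hmn
    clear hmn
    induction k with
    | zero => rw [add_zero]
    | succ k ih =>
      rw [← add_assoc, hb, ← add_zero (b m), sub_eq_add_neg]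
      refine ih.add ?_
      symm
      rw [SModEq.zero, Ideal.neg_mem_iff]
      refine Ideal.mul_mem_right _ _ (Ideal.pow_le_pow_right ?_ (hfI _))
      rw [add_assoc]
      exact le_self_add
  obtain ⟨u, hu⟩ := IsPrecomplete.prec' b aux
  refine ⟨u, ?_, ?_⟩
  · have h2 : ∀ n, f.eval u ≡ 0 [SMOD (I ^ n • ⊤ : Ideal S2)] := by
      intro n
      specialize hu n
      rw [← Ideal.one_eq_top, Ideal.smul_eq_mul, mul_one] at hu ⊢
      refine (hu.symm.eval f).trans ?_
      rw [SModEq.zero]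
      exact Ideal.pow_le_pow_right le_self_add (hfI _)
    exact IsHausdorff.haus' _ h2
  · have h2 := hu 1
    rw [pow_one, ← Ideal.one_eq_top, Ideal.smul_eq_mul, mul_one, SModEq.sub_mem] at h2
    have h3 := constantCoeff_of_mem_span_X h2
    rw [map_sub, hba, sub_eq_zero] at h3
    exact h3.symm

/-- The root with a given constant term is unique if it is simple modulo the variables. -/
lemma hensel_unique (f : Polynomial S2) {u v : S2} (hu : f.eval u = 0) (hv : f.eval v = 0)
    (h : constantCoeff u = constantCoeff v)
    (h1 : constantCoeff (f.derivative.eval u) ≠ 0) : u = v := by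
  obtain ⟨k, hk⟩ := f.binomExpansion u (v - u)
  rw [add_sub_cancel, hu, hv, zero_add] at hk
  have h2 : (f.derivative.eval u + k * (v - u)) * (v - u) = 0 := by
    rw [hk]; ring
  have h3 : f.derivative.eval u + k * (v - u) ≠ 0 := by
    intro h4
    apply h1
    have h5 := congrArg constantCoeff h4
    rw [map_add, map_mul, map_sub, h, sub_self, mul_zero, add_zero, map_zero] at h5
    exact h5
  exact (sub_eq_zero.1 ((mul_eq_zero.1 h2).resolve_left h3)).symm

end hensel

/-! ### Three algebraic series -/

/-- The equation of `z`, where `q = t²`. For `q ≠ 0` it says that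
`Z = 1 + q z` satisfies `256 q Z⁶ = (Z² - 1) (Z² + 3)³`. -/
def pz (q : S2) : Polynomial S2 :=
  .X * (2 + .C q * .X) * ((1 + .C q * .X) ^ 2 + 3) ^ 3 - 256 * (1 + .C q * .X) ^ 6

/-- The equation of `w`; here `r = z (2 + q z)` with `q = t²`, so that `T = Z² = 1 + q r`. With
`U = 1 + q w` it becomes the parametrization `t * numX Z U = x * (den1 Z U * den2 Z U)` of `x`. -/
def pw (t x r : S2) : Polynomial S2 :=
  16 * .C (1 + t ^ 2 * r) ^ 2 * (2 * .X + .C (t ^ 2) * .X ^ 2 - .C r) -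
    .C (x * t) * (.C (2 + t ^ 2 * r) * .X - .C r) *
      (-.C r * (1 + .C (t ^ 2) * .X) ^ 2 + .C (8 * (1 + t ^ 2 * r)) * .X +
        .C ((1 + t ^ 2 * r) * r))

/-- The equation of `v`; here `r = z (2 + q z)`, so that `T = Z² = 1 + q r`. With `V = q v` it
becomes the parametrization `facP Z V = y * (V² * facQ Z V)` of `y`. -/
def pv (q y r : S2) : Polynomial S2 :=
  .C (4 + q * r) * .X - .C r -
    .C (y * q) * .X ^ 2 * (.C (4 + q * r) - .C (q * r) * (.C q * .X))

section roots

variable {q t x y r : S2}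

lemma eval_pz (u : S2) : (pz q).eval u =
    u * (2 + q * u) * ((1 + q * u) ^ 2 + 3) ^ 3 - 256 * (1 + q * u) ^ 6 := by
  simp [pz]

lemma eval_pw (u : S2) : (pw t x r).eval u =
    16 * (1 + t ^ 2 * r) ^ 2 * (2 * u + t ^ 2 * u ^ 2 - r) -
    (x * t) * ((2 + t ^ 2 * r) * u - r) *
      (-r * (1 + t ^ 2 * u) ^ 2 + (8 * (1 + t ^ 2 * r)) * u + (1 + t ^ 2 * r) * r) := by
  simp [pw]

lemma eval_pv (u : S2) : (pv q y r).eval u =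
    (4 + q * r) * u - r - (y * q) * u ^ 2 * ((4 + q * r) - (q * r) * (q * u)) := by
  simp [pv]

lemma eval_pz_deriv (hq : constantCoeff q = 0) (u : S2) :
    constantCoeff ((pz q).derivative.eval u) = 128 := by
  have e2 : (2 : Polynomial S2) = Polynomial.C 2 := rfl
  have e3 : (3 : Polynomial S2) = Polynomial.C 3 := rfl
  have e256 : (256 : Polynomial S2) = Polynomial.C 256 := rfl
  simp [pz, Polynomial.derivative_pow, hq, e2, e3, e256]
  simp only [map_ofNat]
  norm_num

lemma eval_pw_deriv (ht : constantCoeff t = 0) (u : S2) :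
    constantCoeff ((pw t x r).derivative.eval u) = 32 := by
  have e2 : (2 : Polynomial S2) = Polynomial.C 2 := rfl
  have e3 : (16 : Polynomial S2) = Polynomial.C 16 := rfl
  simp [pw, Polynomial.derivative_pow, ht, e2, e3]
  simp only [map_ofNat]
  norm_num

lemma eval_pv_deriv (hq : constantCoeff q = 0) (u : S2) :
    constantCoeff ((pv q y r).derivative.eval u) = 4 := by
  simp [pv, Polynomial.derivative_pow, hq, map_ofNat]

lemma exists_pz (hq : constantCoeff q = 0) :
    ∃ u, (pz q).eval u = 0 ∧ constantCoeff u = 2 := by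
  apply hensel
  · rw [eval_pz]; simp [hq, map_ofNat]; norm_num
  · rw [eval_pz_deriv hq]; norm_num

lemma exists_pw (ht : constantCoeff t = 0) (hr : constantCoeff r = 4) :
    ∃ u, (pw t x r).eval u = 0 ∧ constantCoeff u = 2 := by
  apply hensel
  · rw [eval_pw]; simp [ht, hr, map_ofNat]; norm_num
  · rw [eval_pw_deriv ht]; norm_num

lemma exists_pv (hq : constantCoeff q = 0) (hr : constantCoeff r = 4) :
    ∃ u, (pv q y r).eval u = 0 ∧ constantCoeff u = 1 := by
  apply hensel
  · rw [eval_pv]; simp [hq, hr, map_ofNat]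
  · rw [eval_pv_deriv hq]; norm_num

end roots

lemma constantCoeff_t_sq : constantCoeff (X 0 ^ 2 : S2) = 0 := by simp

/-- The series `z`, a power series in `t` only. -/
def zs : S2 := (exists_pz constantCoeff_t_sq).choose
lemma zs_eval : (pz (X 0 ^ 2)).eval zs = 0 := (exists_pz constantCoeff_t_sq).choose_spec.1
lemma zs_const : constantCoeff zs = 2 := (exists_pz constantCoeff_t_sq).choose_spec.2

/-- The series `r = z (2 + q z)`, for which `Z² = 1 + q r`. -/
def rs : S2 := zs * (2 + X 0 ^ 2 * zs)
lemma rs_const : constantCoeff rs = 4 := by simp [rs, zs_const, map_ofNat]; norm_num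

/-- The series `w` in `t` and `x`. -/
def ws : S2 := (exists_pw (x := X 1) (constantCoeff_X 0) rs_const).choose
lemma ws_eval : (pw (X 0) (X 1) rs).eval ws = 0 :=
  (exists_pw (constantCoeff_X 0) rs_const).choose_spec.1
lemma ws_const : constantCoeff ws = 2 := (exists_pw (constantCoeff_X 0) rs_const).choose_spec.2

/-- The series `v` in `t` and `y`. -/
def vs : S2 := (exists_pv (y := X 1) constantCoeff_t_sq rs_const).choose
lemma vs_eval : (pv (X 0 ^ 2) (X 1) rs).eval vs = 0 :=
  (exists_pv constantCoeff_t_sq rs_const).choose_spec.1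
lemma vs_const : constantCoeff vs = 1 := (exists_pv constantCoeff_t_sq rs_const).choose_spec.2

lemma ev0_zs : ev0 zs = zs := by
  have h := congrArg ev0 zs_eval
  refine hensel_unique (pz (X 0 ^ 2)) ?_ zs_eval (by simp [ev0]) ?_
  · simp only [eval_pz, map_sub, map_mul, map_add, map_pow, map_ofNat, map_one, map_zero] at h ⊢
    simpa [ev0] using h
  · rw [eval_pz_deriv constantCoeff_t_sq]; norm_num

lemma evx_zs : evx zs = evc zs := by rw [← evx_ev0, ev0_zs]
lemma evy_zs : evy zs = evc zs := by rw [← evy_ev0, ev0_zs]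

/-- At `x = 0` the series `w` specializes to `z`. -/
lemma ev0_ws : ev0 ws = zs := by
  have h := congrArg ev0 ws_eval
  have h0 : ev0 (X 0) = X 0 := by simp [ev0]
  have h1 : ev0 (X 1) = 0 := by simp [ev0]
  have hr : ev0 rs = rs := by simp [rs, ev0_zs, h0, map_ofNat]
  refine hensel_unique (pw (X 0) 0 rs) ?_ ?_ (by simp [ev0, ws_const, zs_const]) ?_
  · simp only [eval_pw, map_sub, map_mul, map_add, map_pow, map_ofNat, map_one, map_zero,
      map_neg, h0, h1, hr] at h ⊢
    exact h
  · rw [eval_pw, rs]; ring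
  · rw [eval_pw_deriv (constantCoeff_X 0)]; norm_num

/-- At `y = 0` the series `v` specializes to `r / (T + 3)`. -/
lemma ev0_vs : (4 + X 0 ^ 2 * rs) * ev0 vs = rs := by
  have h := congrArg ev0 vs_eval
  have h0 : ev0 (X 0) = X 0 := by simp [ev0]
  have h1 : ev0 (X 1) = 0 := by simp [ev0]
  have hr : ev0 rs = rs := by simp [rs, ev0_zs, h0, map_ofNat]
  simp only [eval_pv, map_sub, map_mul, map_add, map_pow, map_ofNat, map_zero, h0, h1, hr] at h
  linear_combination h

/-! ### The algebraic certificate -/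

section certificate

variable {R : Type*} [CommRing R]

/-- The curve relating `U` and `V` over the field generated by `Z`. -/
def curve (Z U V : R) : R :=
  Z ^ 2 * (Z ^ 2 + 3) * (Z ^ 2 - 1) - 4 * Z ^ 2 * (3 + 5 * Z ^ 2) * V -
    Z ^ 2 * (Z ^ 2 - 1) * (Z ^ 2 - 9) * V ^ 2 + 8 * Z ^ 2 * (Z ^ 2 + 3) * U * V -
    8 * Z ^ 2 * (Z ^ 2 - 1) * U * V ^ 2 - (Z ^ 2 + 3) * (Z ^ 2 - 1) * U ^ 2 -
    4 * (Z ^ 2 - 1) * U ^ 2 * V + (Z ^ 2 - 1) ^ 2 * U ^ 2 * V ^ 2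

/-- The spurious factor of the elimination polynomial: it also occurs with `-Z` for `Z`. -/
def spur (Z U V : R) : R :=
  Z ^ 2 * (Z ^ 2 + 3) * (Z ^ 2 - 1) +
    (-3 * Z ^ 2 - 12 * Z ^ 3 + 4 * Z ^ 4 - 4 * Z ^ 5 - Z ^ 6) * V +
    (-6 * Z ^ 3 + 4 * Z ^ 4 + 2 * Z ^ 5) * V ^ 2 - Z * (Z ^ 2 + 3) * (Z ^ 2 - 1) * U +
    (6 * Z + 8 * Z ^ 3 + 2 * Z ^ 5) * U * V +
    (3 * Z - 4 * Z ^ 2 + 6 * Z ^ 3 - 4 * Z ^ 4 - Z ^ 5) * U * V ^ 2 + (1 - Z ^ 4) * U ^ 2 * V +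
    (1 - 2 * Z + 2 * Z ^ 2 - 2 * Z ^ 3 + Z ^ 4) * U ^ 2 * V ^ 2

/-- The cubic in `U` in the numerator of `t² G(t;x,0)`. -/
def numA (Z U : R) : R :=
  (Z ^ 2 - 1) ^ 2 * U ^ 3 + Z * (Z ^ 2 - 1) * (Z ^ 2 - 16 * Z - 1) * U ^ 2 -
    Z ^ 2 * U * (Z ^ 4 + 16 * Z ^ 3 - 82 * Z ^ 2 - 16 * Z + 17) -
    Z ^ 3 * (Z ^ 4 - 18 * Z ^ 2 + 128 * Z + 81)

/-- The cubic in `V` in the numerator of `t² G(t;0,y)`. -/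
def numB (Z V : R) : R :=
  (Z - 1) ^ 2 * (Z ^ 2 + 3) * V ^ 3 + (Z ^ 2 - 1) * (Z ^ 2 + 2 * Z - 7) * V ^ 2 +
    (Z ^ 2 - 1) * (Z ^ 2 - 2 * Z - 7) * V + (Z + 1) ^ 2 * (Z ^ 2 + 3)

/-- The polynomial in `Z` in the numerator of `t² G(t;0,0)`. -/
def numC (Z : R) : R := 32 * Z ^ 3 * (3 + 3 * Z - 3 * Z ^ 2 + Z ^ 3)

/-- With `P = y Q`, this is `Q / V²`. -/
def facQ (Z V : R) : R := 3 + V + Z ^ 2 - V * Z ^ 2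
/-- The polynomial `P`, for which `P = y Q`. -/
def facP (Z V : R) : R := 1 - Z ^ 2 + 3 * V + V * Z ^ 2
/-- One of the three factors of `P + Q`. -/
def fac1 (Z V : R) : R := (1 - Z) + (1 + Z) * V
/-- One of the three factors of `P + Q`. -/
def fac2 (Z V : R) : R := (1 + Z) + (1 - Z) * V
/-- The first factor of the denominator of `τ⁻¹ x`; it is also a factor of the numerator of
`t² G(t;x,0)`. -/
def den1 (Z U : R) : R := U + U * Z ^ 2 - 2 * Z ^ 2
/-- The second factor of the denominator of `τ⁻¹ x`; it is also a factor of the denominator of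
`t² G(t;x,0)`. -/
def den2 (Z U : R) : R := U ^ 2 - 9 * Z ^ 2 + 8 * Z ^ 2 * U + Z ^ 4 - Z ^ 2 * U ^ 2
/-- The numerator of `τ⁻¹ x`, whose denominator is `den1 * den2`. -/
def numX (Z U : R) : R := 16 * Z ^ 4 * (U ^ 2 - Z ^ 2)

/-- The cofactor of `curve` in the kernel equation of the three sections. -/
def cof (Z U V : R) : R :=
  16 * Z ^ 2 * (Z + 1) * (
    (-9 * Z ^ 3 - 9 * Z ^ 4 + 3 * Z ^ 5 + 3 * Z ^ 6 + 5 * Z ^ 7 + 5 * Z ^ 8 + Z ^ 9 +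
      Z ^ 10) +
    (-9 * Z ^ 3 + 63 * Z ^ 4 + 105 * Z ^ 5 + 57 * Z ^ 6 + 33 * Z ^ 7 + 9 * Z ^ 8 - Z ^ 9 -
      Z ^ 10) * V +
    (90 * Z ^ 4 + 114 * Z ^ 5 + 16 * Z ^ 6 - 16 * Z ^ 7 - 10 * Z ^ 8 - 2 * Z ^ 9) * V ^ 2 +
    (42 * Z ^ 4 + 6 * Z ^ 5 - 8 * Z ^ 6 - 40 * Z ^ 7 - 2 * Z ^ 8 + 2 * Z ^ 9) * V ^ 3 +
    (6 * Z ^ 4 - 6 * Z ^ 5 - 4 * Z ^ 6 + 4 * Z ^ 7 - 2 * Z ^ 8 + 2 * Z ^ 9) * V ^ 4 +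
    (-9 * Z ^ 2 - 9 * Z ^ 3 + 3 * Z ^ 4 + 3 * Z ^ 5 + 5 * Z ^ 6 + 5 * Z ^ 7 + Z ^ 8 +
      Z ^ 9) * U +
    (-36 * Z ^ 2 - 36 * Z ^ 3 - 48 * Z ^ 4 - 72 * Z ^ 5 - 36 * Z ^ 6 - 20 * Z ^ 7 -
      8 * Z ^ 8) * U * V +
    (-45 * Z ^ 2 - 33 * Z ^ 3 - 69 * Z ^ 4 - 97 * Z ^ 5 - 19 * Z ^ 6 + Z ^ 7 + 5 * Z ^ 8 +
      Z ^ 9) * U * V ^ 2 +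
    (-21 * Z ^ 2 + 21 * Z ^ 3 - 41 * Z ^ 4 + 9 * Z ^ 5 - 3 * Z ^ 6 + 35 * Z ^ 7 + Z ^ 8 -
      Z ^ 9) * U * V ^ 3 +
    (-3 * Z ^ 2 + 9 * Z ^ 3 - 7 * Z ^ 4 - 3 * Z ^ 5 + 7 * Z ^ 6 - 5 * Z ^ 7 + 3 * Z ^ 8 -
      Z ^ 9) * U * V ^ 4 +
    (-3 * Z - 3 * Z ^ 2 - Z ^ 3 - Z ^ 4 + 3 * Z ^ 5 + 3 * Z ^ 6 + Z ^ 7 + Z ^ 8) * U ^ 2 * V +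
    (-12 * Z + 6 * Z ^ 2 + 10 * Z ^ 3 + 16 * Z ^ 4 + 28 * Z ^ 5 + 10 * Z ^ 6 +
      6 * Z ^ 7) * U ^ 2 * V ^ 2 +
    (-12 * Z + 10 * Z ^ 2 - 6 * Z ^ 3 + 16 * Z ^ 4 - 4 * Z ^ 5 + 6 * Z ^ 6 -
      10 * Z ^ 7) * U ^ 2 * V ^ 3 +
    (-3 * Z + 3 * Z ^ 2 - Z ^ 3 + Z ^ 4 + 3 * Z ^ 5 - 3 * Z ^ 6 + Z ^ 7 -
      Z ^ 8) * U ^ 2 * V ^ 4 +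
    (1 + Z + Z ^ 2 + Z ^ 3 - Z ^ 4 - Z ^ 5 - Z ^ 6 - Z ^ 7) * U ^ 3 * V ^ 2 +
    (1 - Z + Z ^ 2 - Z ^ 3 - Z ^ 4 + Z ^ 5 - Z ^ 6 + Z ^ 7) * U ^ 3 * V ^ 3)

lemma facP_add (Z V : R) :
    V ^ 2 * facQ Z V + facP Z V = (1 + V) * fac1 Z V * fac2 Z V := by
  simp only [facQ, facP, fac1, fac2]; ring

/-- Elimination of `τ`, `x` and `y` from the parametrizations of `x` and `y` and the equation of
`τ` factors completely. -/
lemma elimination (Z U V : R) :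
    (facP Z V + V ^ 2 * facQ Z V) * ((den1 Z U * den2 Z U) ^ 2 * (V ^ 2 * facQ Z V) +
        (Z ^ 2 - 1) * (Z ^ 2 + 3) ^ 3 * Z ^ 2 * (U ^ 2 - Z ^ 2) ^ 2 * facP Z V) -
      numX Z U * (den1 Z U * den2 Z U) * facP Z V * (V ^ 2 * facQ Z V) =
    curve Z U V * spur Z U V * spur (-Z) U V := by
  simp only [facP, facQ, den1, den2, numX, curve, spur]; ring

/-- The kernel equation for the three rational expressions in `Z`, `U` and `V`, with cleared
denominators, is a multiple of `curve`. -/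
lemma cofactor (Z U V : R) :
    numX Z U * facP Z V * ((Z ^ 2 - 1) * (Z ^ 2 + 3) ^ 3 * (1 + Z) * (U + Z) * (1 + V) *
        fac2 Z V) -
      (-16 * Z ^ 2 * den1 Z U * numA Z U *
          ((1 + Z) * den1 Z U * (V ^ 2 * facQ Z V) * (1 + V) * fac2 Z V) +
        16 * Z ^ 3 * numB Z V * fac1 Z V *
          ((1 + Z) * (den1 Z U * den2 Z U) * (U + Z) * V * facQ Z V) -
        numC Z * (Z ^ 2 - 1) * (den1 Z U * den2 Z U) * (U + Z) * (V ^ 2 * facQ Z V) *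
          (1 + V) * fac2 Z V) =
    cof Z U V * curve Z U V := by
  simp only [facP, facQ, fac1, fac2, den1, den2, numX, curve, numA, numB, numC, cof]; ring

end certificate

/-! ### Nonvanishing -/

lemma ne_zero_of_constantCoeff {f : S2} (h : constantCoeff f ≠ 0) : f ≠ 0 := by
  rintro rfl
  exact h (map_zero _)

/-- The factor `spur (-Z)` is `q` times a unit. -/
lemma spur_neg_ne_zero {q z w v : S2} (hq : constantCoeff q = 0) (hq0 : q ≠ 0)
    (hz : constantCoeff z = 2) (hv : constantCoeff v = 1) :
    spur (-(1 + q * z)) (1 + q * w) (q * v) ≠ 0 := by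
  obtain ⟨Z, hZ⟩ : ∃ Z, Z = 1 + q * z := ⟨_, rfl⟩
  obtain ⟨U, hU⟩ : ∃ U, U = 1 + q * w := ⟨_, rfl⟩
  have h : spur (-Z) U (q * v) = q * (z * (2 + q * z) * (Z ^ 2 + 3) * (Z ^ 2 + Z * U) +
      v * ((-3 * Z ^ 2 + 12 * Z ^ 3 + 4 * Z ^ 4 + 4 * Z ^ 5 - Z ^ 6) -
        (6 * Z + 8 * Z ^ 3 + 2 * Z ^ 5) * U + (1 - Z ^ 4) * U ^ 2) +
      q * v ^ 2 * ((6 * Z ^ 3 + 4 * Z ^ 4 - 2 * Z ^ 5) +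
        (-3 * Z - 4 * Z ^ 2 - 6 * Z ^ 3 - 4 * Z ^ 4 + Z ^ 5) * U +
        (1 + 2 * Z + 2 * Z ^ 2 + 2 * Z ^ 3 + Z ^ 4) * U ^ 2)) := by
    simp only [spur]
    linear_combination (Z ^ 2 + 3) * (Z ^ 2 + Z * U) * (Z + 1 + q * z) * hZ
  rw [← hZ, ← hU, h]
  refine mul_ne_zero hq0 (ne_zero_of_constantCoeff ?_)
  simp [hZ, hU, hq, hz, hv, map_ofNat]
  norm_num

/-- On the curve parametrized by `z`, `w` and `v`, the factor `spur Z` is, up to a unit,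
`q³ t x` times a series whose value at `x = 0` is a nonzero multiple of `y`. -/
lemma spur_ne_zero {ψ : S2 →ₐ[ℚ] S2} {t x z w v y : S2} (ht0 : t ≠ 0) (hx0 : x ≠ 0)
    (hy : t = x * y) (hψx : ψ x = 0) (hψy : ψ y ≠ 0) (hψz : ψ z = 2)
    (hψv : ψ v = 1)
    (hw : 16 * (1 + t ^ 2 * (z * (2 + t ^ 2 * z))) ^ 2 *
        (2 * w + t ^ 2 * w ^ 2 - z * (2 + t ^ 2 * z)) =
      x * t * ((2 + t ^ 2 * (z * (2 + t ^ 2 * z))) * w - z * (2 + t ^ 2 * z)) *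
        (-(z * (2 + t ^ 2 * z)) * (1 + t ^ 2 * w) ^ 2 +
          (8 * (1 + t ^ 2 * (z * (2 + t ^ 2 * z)))) * w +
          (1 + t ^ 2 * (z * (2 + t ^ 2 * z))) * (z * (2 + t ^ 2 * z)))) :
    spur (1 + t ^ 2 * z) (1 + t ^ 2 * w) (t ^ 2 * v) ≠ 0 := by
  obtain ⟨Z, hZ⟩ : ∃ Z, Z = 1 + t ^ 2 * z := ⟨_, rfl⟩
  obtain ⟨U, hU⟩ : ∃ U, U = 1 + t ^ 2 * w := ⟨_, rfl⟩
  obtain ⟨r, hr⟩ : ∃ r, r = z * (2 + t ^ 2 * z) := ⟨_, rfl⟩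
  obtain ⟨d, hd⟩ : ∃ d, d = -r * U ^ 2 + (8 * (1 + t ^ 2 * r)) * w + (1 + t ^ 2 * r) * r :=
    ⟨_, rfl⟩
  obtain ⟨e, he⟩ : ∃ e, e = (16 * (1 + t ^ 2 * r) ^ 2 - x * t * d) * (2 + t ^ 2 * (w + z)) :=
    ⟨_, rfl⟩
  rw [← hr, ← hU, ← hd] at hw
  rw [← hZ, ← hU]
  have h1 : (w - z) * e = x * t * (t ^ 2 * w * (r - w) * d) := by
    rw [he]
    linear_combination hw + (16 * (1 + t ^ 2 * r) ^ 2 - x * t * d) * hr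
  obtain ⟨S, hS⟩ : ∃ S, S = -Z * (Z ^ 2 + 3) * r + (6 * Z + 8 * Z ^ 3 + 2 * Z ^ 5) * v +
      (3 * Z - 4 * Z ^ 2 + 6 * Z ^ 3 - 4 * Z ^ 4 - Z ^ 5) * (t ^ 2 * v ^ 2) +
      ((1 - Z ^ 4) * v + (1 - 2 * Z + 2 * Z ^ 2 - 2 * Z ^ 3 + Z ^ 4) * (t ^ 2 * v ^ 2)) *
        (U + Z) := ⟨_, rfl⟩
  have h2 : spur Z U (t ^ 2 * v) = (t ^ 2) ^ 2 * (w - z) * S -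
      4 * Z ^ 2 * (t ^ 2 * z) ^ 3 * (t ^ 2 * v) * (1 + t ^ 2 * v) := by
    have hr2 : Z ^ 2 - 1 = t ^ 2 * r := by rw [hr, hZ]; ring
    have hU2 : t ^ 2 * (w - z) = U - Z := by rw [hU, hZ]; ring
    have hZ2 : t ^ 2 * z = Z - 1 := by rw [hZ]; ring
    have e1 : (t ^ 2) ^ 2 * (w - z) * S = (U - Z) * (t ^ 2 * S) := by rw [← hU2]; ring
    have e2 : t ^ 2 * S = -Z * (Z ^ 2 + 3) * (Z ^ 2 - 1) +
        (6 * Z + 8 * Z ^ 3 + 2 * Z ^ 5) * (t ^ 2 * v) +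
        (3 * Z - 4 * Z ^ 2 + 6 * Z ^ 3 - 4 * Z ^ 4 - Z ^ 5) * (t ^ 2 * v) ^ 2 +
        ((1 - Z ^ 4) * (t ^ 2 * v) +
          (1 - 2 * Z + 2 * Z ^ 2 - 2 * Z ^ 3 + Z ^ 4) * (t ^ 2 * v) ^ 2) * (U + Z) := by
      rw [hr2, hS]; ring
    rw [e1, e2, hZ2]
    simp only [spur]
    ring
  have h3 : spur Z U (t ^ 2 * v) * e = (t ^ 2) ^ 3 * (t * x) *
      (w * (r - w) * d * S - 4 * Z ^ 2 * z ^ 3 * v * (1 + t ^ 2 * v) * e * y) := by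
    rw [h2]
    linear_combination (t ^ 2) ^ 2 * S * h1 -
      (t ^ 2) ^ 3 * t * (4 * Z ^ 2 * z ^ 3 * v * (1 + t ^ 2 * v) * e) * hy
  -- the second factor on the right of `h3` does not vanish, as `ψ` maps it to `-1024 ψ(y)`
  intro h4
  rw [h4, zero_mul] at h3
  have h5 : w * (r - w) * d * S - 4 * Z ^ 2 * z ^ 3 * v * (1 + t ^ 2 * v) * e * y = 0 :=
    (mul_eq_zero.1 h3.symm).resolve_left
      (mul_ne_zero (pow_ne_zero 3 (pow_ne_zero 2 ht0)) (mul_ne_zero ht0 hx0))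
  have h6 := congrArg ψ h5
  have hψt : ψ t = 0 := by rw [hy, map_mul, hψx, zero_mul]
  have hψZ : ψ Z = 1 := by simp [hZ, hψt]
  have hψU : ψ U = 1 := by simp [hU, hψt]
  have hψr : ψ r = 4 := by
    simp only [hr, map_mul, map_add, map_pow, map_ofNat, hψz, hψt]; norm_num
  have hψS : ψ S = 0 := by
    simp only [hS, map_mul, map_add, map_sub, map_pow, map_ofNat, map_neg, map_one, hψZ, hψt,
      hψr, hψU, hψv]
    norm_num
  have hψe : ψ e = 32 := by
    simp only [he, map_mul, map_add, map_sub, map_pow, map_ofNat, map_one, hψx, hψt]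
    norm_num
  simp only [map_sub, map_mul, map_add, map_pow, map_ofNat, map_one, map_zero, hψS, hψe, hψZ,
    hψz, hψv, hψt] at h6
  apply hψy
  have h7 : (C (1024 : ℚ) : S2) * ψ y = 0 := by
    rw [map_ofNat]
    linear_combination -h6
  refine (mul_eq_zero.1 h7).resolve_left (ne_zero_of_constantCoeff ?_)
  simp

/-! ### The kernel equation for the algebraic series -/

/-- The three parametrizing series satisfy `curve = 0` after substitution of `t = τ`. -/
lemma kernel_elimination {t x y Z U V : S2} (ht0 : t ≠ 0)
    (hτ : t * ((1 + y) * (1 + x ^ 2 * y)) = x * y)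
    (hZ : 256 * t ^ 2 * Z ^ 6 = (Z ^ 2 - 1) * (Z ^ 2 + 3) ^ 3)
    (hU : t * numX Z U = x * (den1 Z U * den2 Z U))
    (hV : facP Z V = y * (V ^ 2 * facQ Z V))
    (h1 : spur Z U V ≠ 0) (h2 : spur (-Z) U V ≠ 0) : curve Z U V = 0 := by
  have h := elimination Z U V
  obtain ⟨D, hD⟩ : ∃ D, D = den1 Z U * den2 Z U := ⟨_, rfl⟩
  obtain ⟨Q, hQ⟩ : ∃ Q, Q = V ^ 2 * facQ Z V := ⟨_, rfl⟩
  have hN : t * (16 * Z ^ 4 * (U ^ 2 - Z ^ 2)) = x * D := by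
    rw [hD, ← hU]; rfl
  rw [← hD, ← hQ, hV, ← hQ] at h
  rw [← hD] at hU
  -- `elimination` with `P = y Q` substituted; `hZ` and the square of `hN` trade `Z` and `U`
  -- for `t` and `x`, which turns its left-hand side into a multiple of `hτ`
  have h3 : t * (curve Z U V * spur Z U V * spur (-Z) U V) = 0 := by
    rw [← h]
    linear_combination Q ^ 2 * D ^ 2 * hτ - D * y * Q ^ 2 * hU +
      t * (1 + y) * Q ^ 2 * y * (-(Z ^ 2 * (U ^ 2 - Z ^ 2) ^ 2) * hZ +
        (t * (16 * Z ^ 4 * (U ^ 2 - Z ^ 2)) + x * D) * hN)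
  have h4 := (mul_eq_zero.1 h3).resolve_left ht0
  exact (mul_eq_zero.1 ((mul_eq_zero.1 h4).resolve_right h2)).resolve_right h1

/-- The sum of the three sections on the kernel curve, with denominators cleared by `W`. -/
lemma kernel_sum {t x y Z U V a b c k : S2} (ht0 : t ≠ 0) (hk : k ≠ 0)
    (hU : t * numX Z U = x * (den1 Z U * den2 Z U))
    (hV : facP Z V = y * (V ^ 2 * facQ Z V))
    (hcurve : curve Z U V = 0)
    (ha : a * ((Z ^ 2 - 1) * (Z ^ 2 + 3) ^ 3 * (U + Z) * den2 Z U) =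
      t ^ 2 * (-16 * Z ^ 2 * den1 Z U * numA Z U))
    (hb : b * ((Z ^ 2 - 1) * (Z ^ 2 + 3) ^ 3 * (1 + V) ^ 2 * fac2 Z V ^ 2) =
      t ^ 2 * (16 * V * Z ^ 3 * facQ Z V * numB Z V))
    (hc : c * ((1 + Z) * (Z ^ 2 + 3) ^ 3) = t ^ 2 * numC Z)
    (hW : (Z ^ 2 - 1) * (Z ^ 2 + 3) ^ 3 * (1 + Z) * (den1 Z U * den2 Z U) * (U + Z) *
      (V ^ 2 * facQ Z V) * (1 + V) * fac2 Z V = k) :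
    a + (1 + y) * b - c = t * (x * y) := by
  have hF := cofactor Z U V
  rw [hcurve, mul_zero] at hF
  have hadd := facP_add Z V
  rw [hV] at hadd
  have h : t * k * (a + (1 + y) * b - c - t * (x * y)) = 0 := by
    rw [← hW]
    rw [hV] at hF
    generalize numA Z U = A at *
    generalize numB Z V = B at *
    generalize numC Z = C at *
    generalize den1 Z U = D₁ at *
    generalize den2 Z U = D₂ at *
    generalize fac1 Z V = m₁ at *
    generalize fac2 Z V = m₂ at *
    generalize facQ Z V = c₃ at *
    generalize numX Z U = N at *
    linear_combination t * ((1 + Z) * D₁ * (V ^ 2 * c₃) * (1 + V) * m₂) * ha +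
      t * ((1 + Z) * (D₁ * D₂) * (U + Z) * m₁) * hb -
      t * ((Z ^ 2 - 1) * (D₁ * D₂) * (U + Z) * (V ^ 2 * c₃) * (1 + V) * m₂) * hc +
      t * b * ((Z ^ 2 - 1) * (Z ^ 2 + 3) ^ 3 * (1 + Z) * (D₁ * D₂) * (U + Z) * (1 + V) * m₂) *
        hadd - t ^ 3 * hF + t ^ 2 * y * ((Z ^ 2 - 1) * (Z ^ 2 + 3) ^ 3 * (1 + Z) * (U + Z) *
          (V ^ 2 * c₃) * (1 + V) * m₂) * hU
  have h2 := (mul_eq_zero.1 h).resolve_left (mul_ne_zero ht0 hk)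
  linear_combination h2

/-! ### The sections as algebraic series -/

/-- `Z = 1 + q z`. -/
def Zs : S2 := 1 + X 0 ^ 2 * zs
/-- `U = 1 + q w`. -/
def Us : S2 := 1 + X 0 ^ 2 * ws
/-- `V = q v`. -/
def Vs : S2 := X 0 ^ 2 * vs

lemma Zs_const : constantCoeff Zs = 1 := by simp [Zs]
lemma Us_const : constantCoeff Us = 1 := by simp [Us]
lemma Vs_const : constantCoeff Vs = 0 := by simp [Vs]

lemma Zs_sq : Zs ^ 2 = 1 + X 0 ^ 2 * rs := by rw [Zs, rs]; ring

/-- The denominator of the series for `t² G(t;x,0)`. -/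
def denA : S2 :=
  rs * (Zs ^ 2 + 3) ^ 3 * (Us + Zs) * (-rs * Us ^ 2 + 8 * Zs ^ 2 * ws + Zs ^ 2 * rs)
/-- The denominator of the series for `t² G(t;0,y)`. -/
def denB : S2 := rs * (Zs ^ 2 + 3) ^ 3 * (1 + Vs) ^ 2 * fac2 Zs Vs ^ 2
/-- The denominator of the series for `t² G(t;0,0)`. -/
def denC : S2 := (1 + Zs) * (Zs ^ 2 + 3) ^ 3

lemma denA_const : constantCoeff denA ≠ 0 := by
  simp [denA, rs_const, Zs_const, Us_const, ws_const, map_ofNat]; norm_num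
lemma denB_const : constantCoeff denB ≠ 0 := by
  simp [denB, fac2, rs_const, Zs_const, Vs_const, map_ofNat]; norm_num
lemma denC_const : constantCoeff denC ≠ 0 := by
  simp [denC, Zs_const, map_ofNat]; norm_num

/-- The series which will turn out to be `t² G(t;x,0)`. -/
def As : S2 := -16 * Zs ^ 2 * ((1 + Zs ^ 2) * ws - rs) * numA Zs Us * denA⁻¹
/-- The series which will turn out to be `t² G(t;0,y)`. -/
def Bs : S2 := 16 * vs * X 0 ^ 2 * Zs ^ 3 * facQ Zs Vs * numB Zs Vs * denB⁻¹
/-- The series which will turn out to be `t² G(t;0,0)`. -/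
def Cs : S2 := X 0 ^ 2 * numC Zs * denC⁻¹

lemma As_spec : As * denA = -16 * Zs ^ 2 * ((1 + Zs ^ 2) * ws - rs) * numA Zs Us := by
  rw [As, mul_assoc, MvPowerSeries.inv_mul_cancel _ denA_const, mul_one]
lemma Bs_spec : Bs * denB = 16 * vs * X 0 ^ 2 * Zs ^ 3 * facQ Zs Vs * numB Zs Vs := by
  rw [Bs, mul_assoc, MvPowerSeries.inv_mul_cancel _ denB_const, mul_one]
lemma Cs_spec : Cs * denC = X 0 ^ 2 * numC Zs := by
  rw [Cs, mul_assoc, MvPowerSeries.inv_mul_cancel _ denC_const, mul_one]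

section maps

variable (φ : S2 →ₐ[ℚ] S2) (a b : S2)

lemma map_numA : φ (numA a b) = numA (φ a) (φ b) := by simp [numA, map_ofNat]
lemma map_numB : φ (numB a b) = numB (φ a) (φ b) := by simp [numB, map_ofNat]
lemma map_numC : φ (numC a) = numC (φ a) := by simp [numC, map_ofNat]
lemma map_facQ : φ (facQ a b) = facQ (φ a) (φ b) := by simp [facQ, map_ofNat]
lemma map_fac2 : φ (fac2 a b) = fac2 (φ a) (φ b) := by simp [fac2]

end maps

lemma ev0_X0 : ev0 (X 0) = X 0 := by simp [ev0]
lemma ev0_rs : ev0 rs = rs := by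
  simp only [rs, map_mul, map_add, map_pow, map_ofNat, ev0_zs, ev0_X0]
lemma ev0_Zs : ev0 Zs = Zs := by simp [Zs, ev0_zs, ev0_X0]
lemma ev0_Us : ev0 Us = Zs := by simp [Zs, Us, ev0_ws, ev0_X0]

/-- At `x = 0` one has `w = z`, so that the series for `t² G(t;x,0)` is rational in `Z`. -/
lemma ev0_As : ev0 As = Cs := by
  have h := congrArg ev0 As_spec
  simp only [denA, map_mul, map_add, map_sub, map_neg, map_pow, map_ofNat, map_one, map_numA,
    ev0_rs, ev0_Zs, ev0_Us, ev0_ws] at h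
  have hC := Cs_spec
  have hd : ev0 denA * (1 + Zs) ≠ 0 := by
    apply ne_zero_of_constantCoeff
    rw [map_mul]
    refine mul_ne_zero ?_ (by simp [Zs_const])
    rw [ev0, constantCoeff_ev]
    exact denA_const
  simp only [denA, map_mul, map_add, map_neg, map_pow, map_ofNat,
    ev0_rs, ev0_Zs, ev0_Us, ev0_ws] at hd
  apply mul_right_cancel₀ hd
  rw [denC, numC] at hC
  rw [numA] at h
  have hr : rs = zs * (Zs + 1) := by rw [Zs, rs]; ring
  have hq : X 0 ^ 2 * zs = Zs - 1 := by rw [Zs]; ring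
  rw [hr] at h ⊢
  linear_combination (1 + Zs) * h - 16 * Zs ^ 3 * zs ^ 2 * (Zs + 1) * hC -
    16 * Zs ^ 3 * zs * (Zs + 1) * (32 * Zs ^ 3 * (3 + 3 * Zs - 3 * Zs ^ 2 + Zs ^ 3)) * hq

/-- At `y = 0` one has `V = (T - 1) / (T + 3)`, so that the series for `t² G(t;0,y)` is rational
in `Z`. -/
lemma ev0_Bs : ev0 Bs = Cs := by
  have h := congrArg ev0 Bs_spec
  have hC := Cs_spec
  have hV : ev0 Vs = X 0 ^ 2 * ev0 vs := by simp only [Vs, map_mul, map_pow, ev0_X0]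
  simp only [denB, map_mul, map_add, map_pow, map_ofNat, map_one, map_numB, map_facQ, map_fac2,
    ev0_rs, ev0_Zs, ev0_X0] at h
  have hv : (Zs ^ 2 + 3) * ev0 vs = rs := by
    rw [Zs_sq]
    linear_combination ev0_vs
  have hkV : (Zs ^ 2 + 3) * ev0 Vs = Zs ^ 2 - 1 := by
    rw [hV]
    linear_combination X 0 ^ 2 * hv - Zs_sq
  have h1 : (Zs ^ 2 + 3) * (1 + ev0 Vs) = 2 * (Zs ^ 2 + 1) := by linear_combination hkV
  have h2 : (Zs ^ 2 + 3) * fac2 Zs (ev0 Vs) = 2 * (1 + Zs) ^ 2 := by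
    rw [fac2]
    linear_combination (1 - Zs) * hkV
  have h3 : (Zs ^ 2 + 3) * facQ Zs (ev0 Vs) = 8 * (1 + Zs ^ 2) := by
    rw [facQ]
    linear_combination (1 - Zs ^ 2) * hkV
  have h4 : (Zs ^ 2 + 3) ^ 3 * numB Zs (ev0 Vs) =
      (Zs - 1) ^ 2 * (Zs ^ 2 + 3) * (Zs ^ 2 - 1) ^ 3 +
        (Zs ^ 2 - 1) * (Zs ^ 2 + 2 * Zs - 7) * (Zs ^ 2 - 1) ^ 2 * (Zs ^ 2 + 3) +
        (Zs ^ 2 - 1) * (Zs ^ 2 - 2 * Zs - 7) * (Zs ^ 2 - 1) * (Zs ^ 2 + 3) ^ 2 +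
        (Zs + 1) ^ 2 * (Zs ^ 2 + 3) ^ 4 := by
    rw [← hkV, numB]
    have e : (Zs ^ 2 - 1 : S2) = (Zs ^ 2 + 3) * ev0 Vs := hkV.symm
    rw [e]
    ring
  have h5 : ev0 Bs * (rs * (Zs ^ 2 + 3) ^ 4 * (2 * (Zs ^ 2 + 1)) ^ 2 * (2 * (1 + Zs) ^ 2) ^ 2) =
      16 * rs * X 0 ^ 2 * Zs ^ 3 * (8 * (1 + Zs ^ 2)) *
        ((Zs ^ 2 + 3) ^ 3 * numB Zs (ev0 Vs)) := by
    rw [← h1, ← h2, ← h3]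
    linear_combination (Zs ^ 2 + 3) ^ 5 * h + 16 * X 0 ^ 2 * Zs ^ 3 * facQ Zs (ev0 Vs) *
      numB Zs (ev0 Vs) * (Zs ^ 2 + 3) ^ 4 * hv
  rw [h4] at h5
  have hd : rs * (Zs ^ 2 + 3) ^ 4 * (2 * (Zs ^ 2 + 1)) ^ 2 * (2 * (1 + Zs) ^ 2) ^ 2 *
      (1 + Zs) ≠ 0 := by
    apply ne_zero_of_constantCoeff
    simp [rs_const, Zs_const, map_ofNat]
    norm_num
  apply mul_right_cancel₀ hd
  rw [denC, numC] at hC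
  linear_combination (1 + Zs) * h5 -
    rs * (Zs ^ 2 + 3) * (2 * (Zs ^ 2 + 1)) ^ 2 * (2 * (1 + Zs) ^ 2) ^ 2 * hC

section target

lemma evx_X0 : evx (X 0) = tau := by simp [evx]
lemma evx_X1 : evx (X 1) = X 0 := by simp [evx]
lemma evy_X0 : evy (X 0) = tau := by simp [evy]
lemma evy_X1 : evy (X 1) = X 1 := by simp [evy]
lemma evc_X0 : evc (X 0) = tau := by simp [evc]

lemma evx_rs : evx rs = evc rs := by
  simp only [rs, map_mul, map_add, map_pow, map_ofNat, evx_zs, evx_X0, evc_X0]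
lemma evy_rs : evy rs = evc rs := by
  simp only [rs, map_mul, map_add, map_pow, map_ofNat, evy_zs, evy_X0, evc_X0]
lemma evx_Zs : evx Zs = evc Zs := by
  simp only [Zs, map_mul, map_add, map_pow, map_one, evx_zs, evx_X0, evc_X0]
lemma evy_Zs : evy Zs = evc Zs := by
  simp only [Zs, map_mul, map_add, map_pow, map_one, evy_zs, evy_X0, evc_X0]

lemma tau_eq : tau = X 0 * (X 1 * ((1 + X 1) * (1 + X 0 ^ 2 * X 1))⁻¹) := rfl

lemma evc_const (f : S2) : constantCoeff (evc f) = constantCoeff f := by simp [evc]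
lemma evx_const (f : S2) : constantCoeff (evx f) = constantCoeff f := by simp [evx]
lemma evy_const (f : S2) : constantCoeff (evy f) = constantCoeff f := by simp [evy]

/-- The kernel equation for the algebraic series. -/
lemma kernel_algebraic :
    evx As + (1 + X 1) * evy Bs - evc Cs = tau * (X 0 * X 1) := by
  have hxz := evx_zs
  -- the images of the defining equations
  have hz := congrArg evc zs_eval
  have hw := congrArg evx ws_eval
  have hv := congrArg evy vs_eval
  have hA := congrArg evx As_spec
  have hB := congrArg evy Bs_spec
  have hC := congrArg evc Cs_spec
  have hr : evc rs = evc zs * (2 + tau ^ 2 * evc zs) := by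
    simp only [rs, map_mul, map_add, map_pow, map_ofNat, evc_X0]
  have hZ : evc Zs = 1 + tau ^ 2 * evc zs := by
    simp only [Zs, map_mul, map_add, map_pow, map_one, evc_X0]
  have hU : evx Us = 1 + tau ^ 2 * evx ws := by
    simp only [Us, map_mul, map_add, map_pow, map_one, evx_X0]
  have hV : evy Vs = tau ^ 2 * evy vs := by
    simp only [Vs, map_mul, map_pow, evy_X0]
  have hT : evc Zs ^ 2 = 1 + tau ^ 2 * evc rs := by rw [hZ, hr]; ring
  simp only [eval_pz, eval_pw, eval_pv, map_sub, map_mul, map_add, map_neg, map_pow, map_ofNat,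
    map_one, map_zero, evx_X0, evx_X1, evy_X0, evy_X1, evc_X0, evx_rs, evy_rs] at hz hw hv
  simp only [denA, denB, denC, map_sub, map_mul, map_add, map_neg, map_pow, map_ofNat,
    map_one, evy_X0, evc_X0, evx_rs, evy_rs, evx_Zs, evy_Zs, map_numA, map_numB,
    map_numC, map_facQ, map_fac2] at hA hB hC
  have cτ := constantCoeff_tau
  have cz : constantCoeff (evc zs) = 2 := by rw [evc_const, zs_const]
  have cZ : constantCoeff (evc Zs) = 1 := by rw [evc_const, Zs_const]
  have cr : constantCoeff (evc rs) = 4 := by rw [evc_const, rs_const]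
  have cw : constantCoeff (evx ws) = 2 := by rw [evx_const, ws_const]
  have cU : constantCoeff (evx Us) = 1 := by rw [evx_const, Us_const]
  have cv : constantCoeff (evy vs) = 1 := by rw [evy_const, vs_const]
  have cV : constantCoeff (evy Vs) = 0 := by rw [evy_const, Vs_const]
  have hτ0 := tau_ne_zero
  have hτ := tau_spec
  -- setting `x = 0` detects that the spurious factors do not vanish
  obtain ⟨ψ, hψ⟩ : ∃ ψ, ψ = ev 0 (X 1) (map_zero _) (constantCoeff_X 1) := ⟨_, rfl⟩
  have hψx : ψ (X 0) = 0 := by simp [hψ]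
  have hψ1 : ψ (X 1) = X 1 := by simp [hψ]
  have hψτ : ψ tau = 0 := by rw [tau_eq, map_mul, hψx, zero_mul]
  have hψz : ψ (evc zs) = 2 := by
    have h1 : ψ (evc zs) = C (constantCoeff zs) := by
      rw [hψ] at hψτ ⊢
      rw [evc, ev_ev]
      simp only [hψτ, map_zero, ev_zero_zero]
    rw [h1, zs_const, map_ofNat]
  have hψr : ψ (evc rs) = 4 := by
    rw [hr]
    simp only [map_mul, map_add, map_pow, map_ofNat, hψz, hψτ]
    norm_num
  have hψv : ψ (evy vs) = 1 := by
    have h1 := congrArg ψ hv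
    simp only [map_sub, map_mul, map_add, map_pow, map_ofNat, map_zero, hψr, hψτ] at h1
    have h2 : (C (4 : ℚ) : S2) * (ψ (evy vs) - 1) = 0 := by
      rw [map_ofNat]
      linear_combination h1
    exact sub_eq_zero.1
      ((mul_eq_zero.1 h2).resolve_left (ne_zero_of_constantCoeff (by simp)))
  -- `τ = x η`, and `η` does not vanish at `x = 0`
  obtain ⟨η, hη⟩ : ∃ η : S2, η = X 1 * ((1 + X 1) * (1 + X 0 ^ 2 * X 1))⁻¹ := ⟨_, rfl⟩
  have hτη : tau = X 0 * η := by rw [hη]; rfl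
  have hψη : ψ η ≠ 0 := by
    intro h
    have h1 : η * ((1 + X 1) * (1 + X 0 ^ 2 * X 1)) = X 1 := by
      apply mul_left_cancel₀ (X_ne_zero 0)
      rw [← mul_assoc, ← hτη, hτ]
    have h2 := congrArg ψ h1
    rw [map_mul, h, zero_mul, hψ1] at h2
    exact X_ne_zero 1 h2.symm
  have hspur : spur (evc Zs) (evx Us) (evy Vs) ≠ 0 := by
    rw [hZ, hU, hV]
    refine spur_ne_zero (ψ := ψ) hτ0 (X_ne_zero 0) hτη hψx hψη hψz hψv ?_
    rw [← hr]
    linear_combination hw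
  have hspur' : spur (-evc Zs) (evx Us) (evy Vs) ≠ 0 := by
    rw [hZ, hU, hV]
    exact spur_neg_ne_zero (by simp [cτ]) (pow_ne_zero 2 hτ0) cz cv
  generalize evc zs = z at *
  generalize evc rs = r at *
  generalize evx ws = w at *
  generalize evy vs = v at *
  generalize evc Zs = Z at *
  generalize evx Us = U at *
  generalize evy Vs = V at *
  -- the defining equations of `z`, `w` and `v` in terms of `Z`, `U` and `V`
  have hd1 : den1 Z U = tau ^ 2 * ((1 + Z ^ 2) * w - r) := by
    rw [den1, hT, hU]; ring
  have hd2 : den2 Z U = tau ^ 2 * (-r * U ^ 2 + 8 * Z ^ 2 * w + Z ^ 2 * r) := by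
    have e : den2 Z U = U ^ 2 * (1 - Z ^ 2) - 9 * Z ^ 2 + 8 * Z ^ 2 * U + Z ^ 2 * Z ^ 2 := by
      rw [den2]; ring
    rw [e, hT, hU]; ring
  have hX : tau * numX Z U = X 0 * (den1 Z U * den2 Z U) := by
    have e : numX Z U = 16 * (Z ^ 2) ^ 2 * (U ^ 2 - Z ^ 2) := by rw [numX]; ring
    rw [e, hd1, hd2, hT, hU]
    linear_combination tau ^ 3 * hw
  have hP : facP Z V = X 1 * (V ^ 2 * facQ Z V) := by
    rw [facP, facQ, hT, hV]
    linear_combination tau ^ 2 * hv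
  have hZ6 : 256 * tau ^ 2 * Z ^ 6 = (Z ^ 2 - 1) * (Z ^ 2 + 3) ^ 3 := by
    rw [hZ]
    linear_combination -tau ^ 2 * hz
  have hcurve := kernel_elimination hτ0 hτ hZ6 hX hP hspur hspur'
  have hq0 : tau ^ 2 ≠ 0 := pow_ne_zero 2 hτ0
  have hT1 : Z ^ 2 - 1 ≠ 0 := by
    have e : Z ^ 2 - 1 = tau ^ 2 * r := by rw [hT]; ring
    rw [e]
    exact mul_ne_zero hq0 (ne_zero_of_constantCoeff (by rw [cr]; norm_num))
  have hZ0 : Z ≠ 0 := ne_zero_of_constantCoeff (by rw [cZ]; norm_num)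
  have hD2 : den2 Z U ≠ 0 := by
    rw [hd2]
    refine mul_ne_zero hq0 (ne_zero_of_constantCoeff ?_)
    simp [cr, cU, cZ, cw, map_ofNat]
  -- if `den1` vanished, then `U² = Z²`, hence `U (U - 1)² = 0`, although `U = 1` is impossible
  have hD1 : den1 Z U ≠ 0 := by
    intro h
    rw [h, zero_mul, mul_zero, numX] at hX
    have h1 : U ^ 2 - Z ^ 2 = 0 :=
      (mul_eq_zero.1 ((mul_eq_zero.1 hX).resolve_left hτ0)).resolve_left
        (mul_ne_zero (ne_zero_of_constantCoeff (by simp [map_ofNat])) (pow_ne_zero 4 hZ0))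
    have h2 : U * (U - 1) ^ 2 = 0 := by
      rw [den1] at h
      linear_combination h + (U - 2) * h1
    have h3 : U - 1 = 0 := by
      refine pow_eq_zero_iff two_ne_zero |>.1 ((mul_eq_zero.1 h2).resolve_left ?_)
      exact ne_zero_of_constantCoeff (by rw [cU]; norm_num)
    apply hT1
    linear_combination -h1 + (U + 1) * h3
  have hV0 : V ≠ 0 := by
    rw [hV]
    exact mul_ne_zero hq0 (ne_zero_of_constantCoeff (by rw [cv]; norm_num))
  -- all denominators that have to be cleared are nonzero
  have hW : (Z ^ 2 - 1) * (Z ^ 2 + 3) ^ 3 * (1 + Z) * (den1 Z U * den2 Z U) * (U + Z) *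
      (V ^ 2 * facQ Z V) * (1 + V) * fac2 Z V ≠ 0 := by
    have n1 : Z ^ 2 + 3 ≠ 0 :=
      ne_zero_of_constantCoeff (by simp [cZ, map_ofNat]; norm_num)
    have n2 : 1 + Z ≠ 0 := ne_zero_of_constantCoeff (by simp [cZ])
    have n3 : U + Z ≠ 0 := ne_zero_of_constantCoeff (by simp [cZ, cU])
    have n4 : facQ Z V ≠ 0 :=
      ne_zero_of_constantCoeff (by simp [facQ, cZ, cV, map_ofNat]; norm_num)
    have n5 : 1 + V ≠ 0 := ne_zero_of_constantCoeff (by simp [cV])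
    have n6 : fac2 Z V ≠ 0 :=
      ne_zero_of_constantCoeff (by simp [fac2, cZ, cV])
    exact mul_ne_zero (mul_ne_zero (mul_ne_zero (mul_ne_zero (mul_ne_zero (mul_ne_zero
      (mul_ne_zero hT1 (pow_ne_zero 3 n1)) n2) (mul_ne_zero hD1 hD2)) n3)
      (mul_ne_zero (pow_ne_zero 2 hV0) n4)) n5) n6
  have hT' : Z ^ 2 - 1 = tau ^ 2 * r := by rw [hT]; ring
  refine kernel_sum hτ0 hW hX hP hcurve ?_ ?_ hC rfl
  · rw [hd2, hT', hd1]
    linear_combination tau ^ 4 * hA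
  · rw [hT']
    linear_combination tau ^ 2 * hB - 16 * tau ^ 2 * Z ^ 3 * facQ Z V * numB Z V * hV

end target

/-- The algebraic series are the sections: both satisfy the kernel equation, whose solution is
unique. -/
lemma sections_eq : X 0 ^ 2 * GesselGFx0 = As ∧ X 0 ^ 2 * GesselGF0y = Bs := by
  have h1 : evx (X 0 ^ 2 * GesselGFx0 - As) +
      (1 + X 1) * evy (X 0 ^ 2 * GesselGF0y - Bs) - evc (X 0 ^ 2 * GesselGFx0 - As) = 0 := by
    have hk := kernel_equation
    have ha := kernel_algebraic
    have e : ev0 Cs = Cs := by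
      rw [← ev0_As]
      simp only [ev0, ev_ev, ev_X0, map_zero]
    have hc : evc As = evc Cs := by rw [← evx_ev0, ev0_As, ← evx_ev0 Cs, e]
    simp only [map_sub, map_mul, map_pow, evx_X0, evy_X0, evc_X0, hc]
    linear_combination tau * hk - ha
  have h0 : ev0 (X 0 ^ 2 * GesselGFx0 - As) = ev0 (X 0 ^ 2 * GesselGF0y - Bs) := by
    have e1 : ev0 GesselGFx0 = ev0 GesselGF0y := by
      rw [ev0, ev_GFx0, ev_GF0y]
    rw [map_sub, map_sub, map_mul, map_mul, e1, ev0_As, ev0_Bs]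
  obtain ⟨h2, h3⟩ := eq_zero_of_kernel_eq_zero _ _ h0 h1
  exact ⟨sub_eq_zero.1 h2, sub_eq_zero.1 h3⟩

/-! ### Algebraicity -/

/-- The ring of algebraic power series. -/
def algSeries : Subring S2 :=
  (Subalgebra.algebraicClosure (MvPolynomial (Fin 2) ℚ) S2).toSubring

/-- The polynomials in one indeterminate whose coefficients are algebraic power series. -/
def algPoly : Subring (Polynomial S2) := Polynomial.liftsRing algSeries.subtype

lemma algebraMap_eq :
    algebraMap (MvPolynomial (Fin 2) ℚ) S2 = MvPolynomial.coeToMvPowerSeries.ringHom := by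
  refine RingHom.ext fun p => ?_
  rw [MvPowerSeries.algebraMap_apply', Algebra.algebraMap_self, MvPowerSeries.map_id]
  rfl

lemma C_mem_algPoly {a : S2} (h : a ∈ algSeries) : Polynomial.C a ∈ algPoly :=
  (Polynomial.lifts_iff_liftsRing _ _).1 (Polynomial.C_mem_lifts algSeries.subtype ⟨a, h⟩)

lemma X_mem_algPoly : Polynomial.X ∈ algPoly :=
  (Polynomial.lifts_iff_liftsRing _ _).1 (Polynomial.X_mem_lifts algSeries.subtype)

/-- The variables are algebraic, being images of polynomials. -/
lemma X_mem_algSeries (i : Fin 2) : (X i : S2) ∈ algSeries := by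
  have h := (Subalgebra.algebraicClosure (MvPolynomial (Fin 2) ℚ) S2).algebraMap_mem
    (MvPolynomial.X i)
  rw [algebraMap_eq] at h
  rwa [MvPolynomial.coeToMvPowerSeries.ringHom_apply, MvPolynomial.coe_X] at h

/-- A root of a nonzero polynomial with algebraic coefficients is algebraic. -/
lemma mem_algSeries_of_root {f : Polynomial S2} (hf : f ∈ algPoly) (h0 : f ≠ 0) {u : S2}
    (hu : f.eval u = 0) : u ∈ algSeries := by
  obtain ⟨p, rfl⟩ := (Polynomial.mem_lifts _).1 ((Polynomial.lifts_iff_liftsRing _ _).2 hf)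
  change IsAlgebraic (MvPolynomial (Fin 2) ℚ) u
  refine IsAlgebraic.restrictScalars (MvPolynomial (Fin 2) ℚ)
    (S := Subalgebra.algebraicClosure (MvPolynomial (Fin 2) ℚ) S2) ⟨p, ?_, ?_⟩
  · rintro rfl
    exact h0 (Polynomial.map_zero _)
  · rw [Polynomial.eval_map] at hu
    exact hu

lemma ne_zero_of_eval_deriv {f : Polynomial S2} {u : S2}
    (h : constantCoeff (f.derivative.eval u) ≠ 0) : f ≠ 0 := by
  rintro rfl
  simp at h

/-- A quotient of algebraic series is algebraic. -/
lemma mem_algSeries_of_mul {a b c : S2} (h : a * b = c) (hb : b ∈ algSeries) (hb0 : b ≠ 0)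
    (hc : c ∈ algSeries) : a ∈ algSeries :=
  IsAlgebraic.of_mul (mem_nonZeroDivisors_of_ne_zero hb0) hb (by rw [mul_comm, h]; exact hc)

lemma zs_mem : zs ∈ algSeries := by
  have hq := pow_mem (X_mem_algSeries 0) 2
  refine mem_algSeries_of_root ?_ (ne_zero_of_eval_deriv (u := zs) ?_) zs_eval
  · rw [pz]
    with_reducible repeat' first
      | exact X_mem_algPoly | exact C_mem_algPoly hq | exact ofNat_mem _ _ | exact one_mem _
      | apply sub_mem | apply add_mem | apply mul_mem | apply pow_mem
  · rw [eval_pz_deriv constantCoeff_t_sq]; norm_num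

lemma rs_mem : rs ∈ algSeries :=
  mul_mem zs_mem (add_mem (ofNat_mem _ 2) (mul_mem (pow_mem (X_mem_algSeries 0) 2) zs_mem))

lemma ws_mem : ws ∈ algSeries := by
  have hr := rs_mem
  refine mem_algSeries_of_root ?_ (ne_zero_of_eval_deriv (u := ws) ?_) ws_eval
  · rw [pw]
    with_reducible repeat' first
      | exact hr | exact X_mem_algSeries _ | exact X_mem_algPoly
      | exact ofNat_mem _ _ | exact one_mem _
      | apply C_mem_algPoly
      | apply sub_mem | apply add_mem | apply mul_mem | apply pow_mem | apply neg_mem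
  · rw [eval_pw_deriv (constantCoeff_X 0)]; norm_num

lemma vs_mem : vs ∈ algSeries := by
  have hr := rs_mem
  refine mem_algSeries_of_root ?_ (ne_zero_of_eval_deriv (u := vs) ?_) vs_eval
  · rw [pv]
    with_reducible repeat' first
      | exact hr | exact X_mem_algSeries _ | exact X_mem_algPoly
      | exact ofNat_mem _ _ | exact one_mem _
      | apply C_mem_algPoly
      | apply sub_mem | apply add_mem | apply mul_mem | apply pow_mem
  · rw [eval_pv_deriv constantCoeff_t_sq]; norm_num

lemma Zs_mem : Zs ∈ algSeries :=
  add_mem (one_mem _) (mul_mem (pow_mem (X_mem_algSeries 0) 2) zs_mem)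
lemma Us_mem : Us ∈ algSeries :=
  add_mem (one_mem _) (mul_mem (pow_mem (X_mem_algSeries 0) 2) ws_mem)
lemma Vs_mem : Vs ∈ algSeries := mul_mem (pow_mem (X_mem_algSeries 0) 2) vs_mem

lemma As_mem : As ∈ algSeries := by
  refine mem_algSeries_of_mul As_spec ?_ (ne_zero_of_constantCoeff denA_const) ?_
  · rw [denA]
    with_reducible repeat' first
      | exact rs_mem | exact ws_mem | exact Zs_mem | exact Us_mem
      | exact ofNat_mem _ _ | exact one_mem _
      | apply sub_mem | apply add_mem | apply mul_mem | apply pow_mem | apply neg_mem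
  · rw [numA]
    with_reducible repeat' first
      | exact rs_mem | exact ws_mem | exact Zs_mem | exact Us_mem
      | exact ofNat_mem _ _ | exact one_mem _
      | apply sub_mem | apply add_mem | apply mul_mem | apply pow_mem | apply neg_mem

lemma Bs_mem : Bs ∈ algSeries := by
  refine mem_algSeries_of_mul Bs_spec ?_ (ne_zero_of_constantCoeff denB_const) ?_
  · rw [denB, fac2]
    with_reducible repeat' first
      | exact rs_mem | exact vs_mem | exact Zs_mem | exact Vs_mem
      | exact ofNat_mem _ _ | exact one_mem _
      | apply sub_mem | apply add_mem | apply mul_mem | apply pow_mem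
  · rw [numB, facQ]
    with_reducible repeat' first
      | exact rs_mem | exact vs_mem | exact Zs_mem | exact Vs_mem | exact X_mem_algSeries _
      | exact ofNat_mem _ _ | exact one_mem _
      | apply sub_mem | apply add_mem | apply mul_mem | apply pow_mem

/-- Membership in `algSeries`, in terms of polynomials over the polynomial ring. -/
lemma exists_polynomial {f c : S2} (h : X 0 ^ 2 * f = c) (hc : c ∈ algSeries) :
    ∃ P : Polynomial (MvPolynomial (Fin 2) ℚ), P ≠ 0 ∧
      Polynomial.eval₂ MvPolynomial.coeToMvPowerSeries.ringHom f P = 0 := by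
  have hf : f ∈ algSeries :=
    mem_algSeries_of_mul (by rw [mul_comm, h]) (pow_mem (X_mem_algSeries 0) 2)
      (pow_ne_zero 2 (X_ne_zero 0)) hc
  obtain ⟨P, hP, h0⟩ := hf
  refine ⟨P, hP, ?_⟩
  rw [← algebraMap_eq]
  exact h0

end Gessel

/-- Both section series `G(t;x,0)` and `G(t;0,y)` are algebraic. -/
theorem gessel_sections_algebraic :
    (∃ P₁ : Polynomial (MvPolynomial (Fin 2) ℚ), P₁ ≠ 0 ∧
      Polynomial.eval₂ MvPolynomial.coeToMvPowerSeries.ringHom GesselGFx0 P₁ = 0) ∧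
    (∃ P₂ : Polynomial (MvPolynomial (Fin 2) ℚ), P₂ ≠ 0 ∧
      Polynomial.eval₂ MvPolynomial.coeToMvPowerSeries.ringHom GesselGF0y P₂ = 0) := by
  exact ⟨Gessel.exists_polynomial Gessel.sections_eq.1 Gessel.As_mem,
    Gessel.exists_polynomial Gessel.sections_eq.2 Gessel.Bs_mem⟩
end
end

section
/- The series G(t;1,1) = Σ_{n≥0} (Σ_{i,j≥0} g(n;i,j)) tⁿ ∈ ℚ[[t]], the generating function of Gessel walks with arbitrary endpoint (i.e., the coefficient of tⁿ is the total number of Gessel walks of length n), is algebraic: there is a nonzero polynomial P(T,t) ∈ ℚ[T,t] with P(G(t;1,1), t) = 0. -/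
/-!
Let `Q(x,y)` be the generating function of Gessel walks, with `x` and `y` marking the endpoint. The
proof uses Tutte's invariants. Removing the last step of a walk gives (`functional_equation`)

  `K(x,y) Q(x,y) = x y - t Q(x,0) - t (1+y) Q(0,y) + t Q(0,0)`,
  `K(x,y) = x y - t (x² y + x² y² + y + 1)`.

Two pairs of series agree on the zero set of the kernel `K`: with `p = y / (1+y)²`,

  `I₀ = t (x + 1/x) - t² (x - 1/x)²` and `J₀ = p + t² / p`,
  `I = t/x + t² Q(x,0)` and `J = y/(1+y) - t (t (1+y) Q(0,y) - t Q(0,0))`,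

the first by the form of `K`, the second by the functional equation. For suitable series `β`, `C`
in `t`, the combinations `(I₀ + I² - β I - C) I` and `(J₀ + J² - β J - C) J` have no poles
at `x = 0` and `y = 0`, and their difference is an explicit multiple of `K`
(`kernel_factor`). As `K` reduces to the monomial `x y` at `t = 0`, a difference of a series in `x`
and a series in `y` is divisible by `K` only if it is zero (`invariant_lemma`). Hence both
combinations equal one series `A` in `t` alone (`invariant_equations`).

At the critical points `x = ±1` of `I₀` and `y = 1` of `J₀` the derivative of these equations shows
that the values of `I` and `J` there are double roots of the respective cubics (`critical_at_sign`,
`critical_at_one`). This gives six equations; eliminating `β`, `C`, `A` leaves three equations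
between `t` and the numbers `V = 2 I(1)`, `U = 2 I(-1)`, `l = 2 J(1)` (`critical_relations`), which
make all three algebraic over `ℚ(t)` (`algebraic_of_relations`). Finally the functional equation at
`x = y = 1` expresses `G(t;1,1)` through them: `2 t (1 - 4 t) G = 4 t - V - 1 + l`.
-/

noncomputable section

/-- The total number of Gessel walks of length `n` (with arbitrary endpoint). -/
def gesselTotal (n : ℕ) : ℕ := Nat.card {w : Fin n → ℤ × ℤ // IsGesselWalk w}

/-- The generating function `G(t;1,1)` of Gessel walks with arbitrary endpoint:
the coefficient of `t^n` is the total number of Gessel walks of length `n`. -/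
def GesselGF11 : PowerSeries ℚ := PowerSeries.mk fun n => (gesselTotal n : ℚ)

/-! ### Endpoint enumerators of Gessel walks -/

section Combinatorics

/-- The four Gessel steps, as a finset. -/
def stepFinset : Finset (ℤ × ℤ) := {(1, 0), (-1, 0), (1, 1), (-1, -1)}

open Classical in
/-- The Gessel walks of length `n`, as a finset. -/
def walks (n : ℕ) : Finset (Fin n → ℤ × ℤ) :=
  (Fintype.piFinset fun _ => stepFinset).filter IsGesselWalk

lemma mem_stepFinset {s : ℤ × ℤ} : s ∈ stepFinset ↔ s ∈ gesselSteps := by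
  simp [stepFinset, gesselSteps]

lemma mem_walks {n : ℕ} {w : Fin n → ℤ × ℤ} : w ∈ walks n ↔ IsGesselWalk w := by
  simp only [walks, Finset.mem_filter, Fintype.mem_piFinset, and_iff_right_iff_imp]
  exact fun h m => mem_stepFinset.2 (h.1 m)

lemma gesselTotal_eq (n : ℕ) : gesselTotal n = (walks n).card :=
  Nat.subtype_card _ fun _ => mem_walks

lemma walkPos_eq_sum {n : ℕ} (w : Fin n → ℤ × ℤ) (k : ℕ) :
    walkPos w k = ∑ m : Fin n, if (m : ℕ) < k then w m else 0 := by
  rw [walkPos, Finset.sum_filter]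

lemma walkPos_snoc_of_le {n : ℕ} (w : Fin n → ℤ × ℤ) (s : ℤ × ℤ) {k : ℕ} (hk : k ≤ n) :
    walkPos (Fin.snoc w s : Fin (n + 1) → ℤ × ℤ) k = walkPos w k := by
  simp [walkPos_eq_sum, Fin.sum_univ_castSucc, hk]

lemma walkPos_snoc_last {n : ℕ} (w : Fin n → ℤ × ℤ) (s : ℤ × ℤ) :
    walkPos (Fin.snoc w s : Fin (n + 1) → ℤ × ℤ) (n + 1) = walkPos w n + s := by
  simp only [walkPos_eq_sum, Fin.sum_univ_castSucc, Fin.snoc_castSucc, Fin.snoc_last,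
    Fin.val_castSucc, Fin.val_last, lt_add_one, if_true]
  congr 1
  exact Finset.sum_congr rfl fun m _ => by
    rw [if_pos m.2, if_pos (m.2.trans (Nat.lt_succ_self n))]

lemma isGesselWalk_snoc {n : ℕ} (w : Fin n → ℤ × ℤ) (s : ℤ × ℤ) :
    IsGesselWalk (Fin.snoc w s : Fin (n + 1) → ℤ × ℤ) ↔
      IsGesselWalk w ∧ s ∈ stepFinset ∧
        0 ≤ (walkPos w n + s).1 ∧ 0 ≤ (walkPos w n + s).2 := by
  rw [mem_stepFinset]
  constructor
  · rintro ⟨h1, h2⟩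
    refine ⟨⟨fun m => ?_, fun k hk => ?_⟩, ?_, ?_⟩
    · simpa using h1 m.castSucc
    · simpa [walkPos_snoc_of_le w s hk] using h2 k (by omega)
    · simpa using h1 (Fin.last n)
    · simpa only [walkPos_snoc_last] using h2 (n + 1) le_rfl
  · rintro ⟨⟨h1, h2⟩, hs, h3⟩
    refine ⟨fun m => ?_, fun k hk => ?_⟩
    · refine Fin.lastCases ?_ (fun i => ?_) m
      · simpa using hs
      · simpa using h1 i
    · rcases Nat.lt_or_ge n k with h | h
      · obtain rfl : k = n + 1 := by omega
        rwa [walkPos_snoc_last]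
      · rw [walkPos_snoc_of_le w s h]
        exact h2 k h

/-- Summation over the walks of length `n + 1`, organised by their last step. -/
lemma sum_walks_succ {M : Type*} [AddCommMonoid M] (n : ℕ) (F : ℤ × ℤ → M) :
    ∑ w ∈ walks (n + 1), F (walkPos w (n + 1)) =
      ∑ w ∈ walks n, ∑ s ∈ stepFinset,
        if 0 ≤ (walkPos w n + s).1 ∧ 0 ≤ (walkPos w n + s).2
          then F (walkPos w n + s) else 0 := by
  rw [← Finset.sum_product', ← Finset.sum_filter]
  symm
  refine Finset.sum_bij' (fun p _ => (Fin.snoc p.1 p.2 : Fin (n + 1) → ℤ × ℤ))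
    (fun w _ => (Fin.init w, w (Fin.last n))) ?_ ?_ ?_ ?_ ?_
  · rintro ⟨w, s⟩ h
    simp only [Finset.mem_filter, Finset.mem_product, mem_walks] at h
    exact mem_walks.2 ((isGesselWalk_snoc w s).2 ⟨h.1.1, h.1.2, h.2⟩)
  · intro w h
    rw [mem_walks, ← Fin.snoc_init_self w, isGesselWalk_snoc] at h
    simp only [Finset.mem_filter, Finset.mem_product, mem_walks]
    exact ⟨⟨h.1, h.2.1⟩, h.2.2⟩
  · rintro ⟨w, s⟩ _
    simp
  · intro w _
    simp
  · rintro ⟨w, s⟩ _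
    simp only [walkPos_snoc_last]

/-- The monomial `x ^ i * y ^ j` attached to the point `(i, j)` of the quadrant. The outer
variable of `ℚ[y][x]` is `x`. -/
def pointMonomial (p : ℤ × ℤ) : Polynomial (Polynomial ℚ) :=
  Polynomial.X ^ p.1.toNat * Polynomial.C (Polynomial.X ^ p.2.toNat)

/-- The endpoint enumerator `∑ g(n;i,j) x ^ i y ^ j` of Gessel walks of length `n`. -/
def walkPoly (n : ℕ) : Polynomial (Polynomial ℚ) :=
  ∑ w ∈ walks n, pointMonomial (walkPos w n)

/-- The substitution `x = 0` in `ℚ[y][x]`. -/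
def setX0 : Polynomial (Polynomial ℚ) →+* Polynomial ℚ := Polynomial.evalRingHom 0

/-- The substitution `y = 0` in `ℚ[y][x]`. -/
def setY0 : Polynomial (Polynomial ℚ) →+* Polynomial ℚ :=
  Polynomial.mapRingHom (Polynomial.evalRingHom 0)

/-- The embedding of `ℚ[x]` into `ℚ[y][x]`. -/
def inclX : Polynomial ℚ →+* Polynomial (Polynomial ℚ) := Polynomial.mapRingHom Polynomial.C

/-- The embedding of `ℚ[y]` into `ℚ[y][x]`. -/
def inclY : Polynomial ℚ →+* Polynomial (Polynomial ℚ) := Polynomial.C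

/-- The embedding of `ℚ` into `ℚ[y][x]`. -/
def inclQ : ℚ →+* Polynomial (Polynomial ℚ) := Polynomial.C.comp Polynomial.C

/-- The effect on one monomial of appending a step that stays in the quadrant. The steps
`(-1, 0)` and `(-1, -1)` are allowed only when `i > 0`, resp. `i > 0` and `j > 0`, which is what
the specialisations at `x = 0` and `y = 0` account for. -/
lemma step_monomial (p : ℤ × ℤ) (h1 : 0 ≤ p.1) (h2 : 0 ≤ p.2) :
    Polynomial.X * inclY Polynomial.X * (∑ s ∈ stepFinset,
        if 0 ≤ (p + s).1 ∧ 0 ≤ (p + s).2 then pointMonomial (p + s) else 0) =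
      (Polynomial.X ^ 2 * inclY Polynomial.X + Polynomial.X ^ 2 * inclY Polynomial.X ^ 2
          + inclY Polynomial.X + 1) * pointMonomial p
        - (1 + inclY Polynomial.X) * inclY (setX0 (pointMonomial p))
        - inclX (setY0 (pointMonomial p))
        + inclQ ((setX0 (pointMonomial p)).eval 0) := by
  obtain ⟨i, j⟩ := p
  lift i to ℕ using h1
  lift j to ℕ using h2
  have e1 (k : ℕ) : ((k : ℤ) + 1).toNat = k + 1 := by omega
  have e2 (k : ℕ) : ((k : ℤ) + 1 + 1).toNat = k + 2 := by omega
  have e3 (k : ℕ) : (0 : ℤ) ≤ (k : ℤ) + 1 := by omega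
  have e4 (k : ℕ) : (0 : ℤ) ≤ (k : ℤ) + 1 + 1 := by omega
  rw [stepFinset, Finset.sum_insert (by decide), Finset.sum_insert (by decide),
    Finset.sum_insert (by decide), Finset.sum_singleton]
  rcases i with _ | i <;> rcases j with _ | j <;>
    simp [pointMonomial, setX0, setY0, inclX, inclY, inclQ, e1, e2, e3, e4, pow_succ] <;> ring

/-- The recursion for the endpoint enumerators, multiplied by `x * y`. -/
lemma walkPoly_succ (n : ℕ) :
    Polynomial.X * inclY Polynomial.X * walkPoly (n + 1) =
      (Polynomial.X ^ 2 * inclY Polynomial.X + Polynomial.X ^ 2 * inclY Polynomial.X ^ 2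
          + inclY Polynomial.X + 1) * walkPoly n
        - (1 + inclY Polynomial.X) * inclY (setX0 (walkPoly n))
        - inclX (setY0 (walkPoly n))
        + inclQ ((setX0 (walkPoly n)).eval 0) := by
  simp only [walkPoly, sum_walks_succ n pointMonomial, map_sum, Polynomial.eval_finsetSum,
    Finset.mul_sum, ← Finset.sum_sub_distrib, ← Finset.sum_add_distrib]
  refine Finset.sum_congr rfl fun w hw => ?_
  obtain ⟨h1, h2⟩ := (mem_walks.1 hw).2 n le_rfl
  rw [← step_monomial _ h1 h2, Finset.mul_sum]

lemma walkPoly_zero : walkPoly 0 = 1 := by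
  have : walks 0 = {default} := by
    refine Finset.eq_singleton_iff_unique_mem.2 ⟨mem_walks.2 ⟨fun m => m.elim0, ?_⟩, ?_⟩
    · intro k _
      simp [walkPos]
    · intro w _
      exact Subsingleton.elim _ _
  simp [walkPoly, this, walkPos, pointMonomial]

lemma walkPoly_eval_one (n : ℕ) :
    ((walkPoly n).eval 1).eval 1 = (gesselTotal n : ℚ) := by
  simp [walkPoly, gesselTotal_eq, pointMonomial, Polynomial.eval_finsetSum]

end Combinatorics

/-! ### Generating functions and the invariant lemma -/

section Invariants

/-- **Division lemma.** Coefficientwise division by `X - r`. -/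
lemma exists_eq_eval_add_mul {R : Type*} [CommRing R] (r : R) (f : PowerSeries (Polynomial R)) :
    ∃ f' : PowerSeries (Polynomial R),
      f = PowerSeries.map Polynomial.C (PowerSeries.map (Polynomial.evalRingHom r) f)
        + PowerSeries.C (Polynomial.X - Polynomial.C r) * f' := by
  refine ⟨PowerSeries.mk fun n => PowerSeries.coeff n f /ₘ (Polynomial.X - Polynomial.C r), ?_⟩
  ext1 n
  rw [map_add, PowerSeries.coeff_C_mul, PowerSeries.coeff_mk, PowerSeries.coeff_map,
    PowerSeries.coeff_map, Polynomial.coe_evalRingHom, ← Polynomial.modByMonic_X_sub_C_eq_C_eval,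
    Polynomial.modByMonic_add_div]

/-- **Invariant lemma.** If `(1 + y)³ f(x) - h(y)` is a multiple of the kernel
`x * y - t * k(x, y)`, then the cofactor vanishes, because the kernel reduces to `x * y` at
`t = 0`; hence `f` and `h / (1 + y)³` equal the same series in `t` alone. -/
lemma invariant_lemma (f h : PowerSeries (Polynomial ℚ)) (k : Polynomial (Polynomial ℚ))
    (H : PowerSeries (Polynomial (Polynomial ℚ)))
    (e : PowerSeries.C ((1 + inclY Polynomial.X) ^ 3) * PowerSeries.map inclX f
        - PowerSeries.map inclY h
      = (PowerSeries.C (Polynomial.X * inclY Polynomial.X)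
          - PowerSeries.X * PowerSeries.C k) * H) :
    ∃ A : PowerSeries ℚ, f = PowerSeries.map Polynomial.C A ∧
      h = PowerSeries.C ((1 + Polynomial.X) ^ 3) * PowerSeries.map Polynomial.C A := by
  -- One coefficient of the identity: set `x = 0`, then `y = 0`.
  have key : ∀ (p s : Polynomial ℚ) (z : Polynomial (Polynomial ℚ)),
      (1 + inclY Polynomial.X) ^ 3 * inclX p - inclY s
        = Polynomial.X * inclY Polynomial.X * z →
      z = 0 ∧ p = Polynomial.C (p.eval 0) ∧
        s = (1 + Polynomial.X) ^ 3 * Polynomial.C (p.eval 0) := by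
    intro p s z hz
    have hs : s = (1 + Polynomial.X) ^ 3 * Polynomial.C (p.eval 0) := by
      have h0 := congrArg (Polynomial.eval 0) hz
      have h1 : Polynomial.eval 0 (inclX p) = Polynomial.C (p.eval 0) := by
        simp [inclX, ← Polynomial.coeff_zero_eq_eval_zero]
      simp only [Polynomial.eval_sub, Polynomial.eval_mul, Polynomial.eval_pow,
        Polynomial.eval_add, Polynomial.eval_one, h1, Polynomial.eval_X, zero_mul] at h0
      simp only [inclY, Polynomial.eval_C] at h0
      exact (sub_eq_zero.1 h0).symm
    have hp : p = Polynomial.C (p.eval 0) := by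
      have h0 := congrArg setY0 hz
      have h1 : setY0 (inclX p) = p := by
        have h2 : (Polynomial.evalRingHom (0 : ℚ)).comp Polynomial.C = RingHom.id ℚ :=
          RingHom.ext fun u => by simp
        simp [setY0, inclX, Polynomial.map_map, h2]
      have h2 : ∀ u, setY0 (inclY u) = Polynomial.C (u.eval 0) := by
        intro u
        simp [setY0, inclY]
      simp only [map_sub, map_mul, map_pow, map_add, map_one, h1, h2, hs] at h0
      simpa [sub_eq_zero] using h0
    refine ⟨?_, hp, hs⟩
    have h0 : Polynomial.X * inclY Polynomial.X * z = 0 := by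
      have h1 : inclX (Polynomial.C (p.eval 0)) = inclY (Polynomial.C (p.eval 0)) := by
        simp [inclX, inclY]
      rw [← hz, hs, hp, h1]
      simp
    have hy : inclY Polynomial.X ≠ 0 := by
      simp [inclY]
    simpa [Polynomial.X_ne_zero, hy] using h0
  have step : ∀ n, PowerSeries.coeff n H = 0 ∧
      PowerSeries.coeff n f = Polynomial.C ((PowerSeries.coeff n f).eval 0) ∧
      PowerSeries.coeff n h =
        (1 + Polynomial.X) ^ 3 * Polynomial.C ((PowerSeries.coeff n f).eval 0) := by
    intro n
    induction n with
    | zero =>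
      refine key _ _ _ ?_
      have := congrArg (PowerSeries.coeff 0) e
      rw [sub_mul, map_sub, map_sub, mul_assoc, PowerSeries.coeff_zero_X_mul,
        PowerSeries.coeff_C_mul, PowerSeries.coeff_C_mul, PowerSeries.coeff_map,
        PowerSeries.coeff_map, sub_zero] at this
      exact this
    | succ n ih =>
      refine key _ _ _ ?_
      have := congrArg (PowerSeries.coeff (n + 1)) e
      rw [sub_mul, map_sub, map_sub, mul_assoc, PowerSeries.coeff_succ_X_mul,
        PowerSeries.coeff_C_mul, PowerSeries.coeff_C_mul, PowerSeries.coeff_map,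
        PowerSeries.coeff_map, PowerSeries.coeff_C_mul, ih.1, mul_zero, sub_zero] at this
      exact this
  refine ⟨PowerSeries.map (Polynomial.evalRingHom 0) f, ?_, ?_⟩
  · ext1 n
    simpa using (step n).2.1
  · ext1 n
    rw [PowerSeries.coeff_C_mul]
    simpa using (step n).2.2

/-- The generating function `Q(x, y)` of Gessel walks. -/
def walkGF : PowerSeries (Polynomial (Polynomial ℚ)) := PowerSeries.mk walkPoly

/-- The specialisation `Q(x, 0)`. -/
def gfX : PowerSeries (Polynomial ℚ) := PowerSeries.map setY0 walkGF

/-- The specialisation `Q(0, y)`. -/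
def gfY : PowerSeries (Polynomial ℚ) := PowerSeries.map setX0 walkGF

/-- The specialisation `Q(0, 0)`. -/
def gf00 : PowerSeries ℚ := PowerSeries.map (Polynomial.evalRingHom 0) gfY

lemma gf00_eq : PowerSeries.map (Polynomial.evalRingHom 0) gfX = gf00 := by
  have : (Polynomial.evalRingHom (0 : ℚ)).comp setY0 = (Polynomial.evalRingHom 0).comp setX0 := by
    ext <;> simp [setX0, setY0]
  ext n
  simpa [gf00, gfX, gfY, walkGF] using congrArg (fun F => F (walkPoly n)) this

/-- The functional equation for `Q(x, y)`. -/
lemma functional_equation :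
    PowerSeries.C (Polynomial.X * inclY Polynomial.X) * walkGF =
      PowerSeries.C (Polynomial.X * inclY Polynomial.X) + PowerSeries.X *
        (PowerSeries.C (Polynomial.X ^ 2 * inclY Polynomial.X
            + Polynomial.X ^ 2 * inclY Polynomial.X ^ 2 + inclY Polynomial.X + 1) * walkGF
          - PowerSeries.C (1 + inclY Polynomial.X) * PowerSeries.map inclY gfY
          - PowerSeries.map inclX gfX + PowerSeries.map inclQ gf00) := by
  ext1 n
  rcases n with _ | n
  · rw [map_add, PowerSeries.coeff_zero_X_mul, PowerSeries.coeff_C_mul, walkGF,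
      PowerSeries.coeff_mk, walkPoly_zero]
    simp
  · rw [map_add, PowerSeries.coeff_succ_X_mul, PowerSeries.coeff_C_mul, map_add, map_sub, map_sub,
      PowerSeries.coeff_C_mul, PowerSeries.coeff_C_mul, walkGF, PowerSeries.coeff_mk,
      PowerSeries.coeff_mk, walkPoly_succ]
    simp [gfX, gfY, gf00, walkGF]

end Invariants

/-! ### The cubic equation of the invariants modulo the kernel -/

set_option maxRecDepth 10000 in
set_option maxHeartbeats 4000000 in
/-- The kernel divides the difference of the two cubic expressions in the invariants, with an
explicit cofactor. Here `Q(x,0) = c + x * (a1 + x * a2)`, `Q(0,y) = c + y * b1` and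
`Q(x,y) = Q(0,y) + x * q1`; the hypothesis `FE` is the functional equation divided by `x`. The
cubics are cleared of denominators: `v = 1 + t * x * Q(x,0)` and `j = y * j'` are the numerators of
`I(x)` and `J(y)`, and `x ^ 3 * m` is the factor of the first cubic that multiplies `v`. The choice
`β = 1 + 2 * t ^ 2 * Q(0,0)` and that of `C` are what make this factor divisible by `x ^ 3`. -/
lemma kernel_factor {R : Type*} [CommRing R] (x y t c a1 a2 b1 q1 : R)
    (FE : y * ((c + y * b1) + x * q1) - t * x * (y + y ^ 2) * ((c + y * b1) + x * q1)
      - t * (1 + y) * q1 = y - t * (a1 + x * a2)) (j' C m : R)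
    (hj : j' = 1 - t ^ 2 * (1 + y) * (c + y * b1 + b1))
    (hC : C = 2 * t ^ 2 + t ^ 2 * (t ^ 2 * c ^ 2 + 2 * t * a1) - (t + 2 * t ^ 3 * c) * (t * c))
    (hm : m = t + 2 * t ^ 3 * a2 - t ^ 2 * a1 + x * (t ^ 4 * a1 ^ 2 - t ^ 2 - t ^ 2 * a2)
      + 2 * t ^ 4 * a1 * a2 * x ^ 2 + t ^ 4 * a2 ^ 2 * x ^ 3) :
    (1 + y) ^ 3 * (t * (m * (1 + t * x * (c + x * (a1 + x * a2)))))
      - j' * (y ^ 2 + t ^ 2 * (1 + y) ^ 4 + y * (y * j') ^ 2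
        - (1 + 2 * t ^ 2 * c) * y * (y * j') * (1 + y) - C * y * (1 + y) ^ 2)
    = (x * y - t * (x ^ 2 * y + x ^ 2 * y ^ 2 + y + 1)) *
      (-m * (1 + y) ^ 2 * (t * (1 + y) * x * ((c + y * b1) + x * q1) + 1)
        + j' * (1 + y) * (t - t ^ 2 * y * (a1 + x * a2)
          - y * (c + y * b1) * ((t * (y * j') - (t + t ^ 3 * c) * (1 + y))
              + (1 + y) * t ^ 3 * x * (a1 + x * a2))
          - y * q1 * ((1 + y) * t ^ 2 + x * (t * (y * j') - (t + t ^ 3 * c) * (1 + y))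
              + (1 + y) * t ^ 3 * x ^ 2 * (a1 + x * a2)))) := by
  subst hC hm hj
  linear_combination (-(-(t + 2 * t ^ 3 * a2 - t ^ 2 * a1 + x * (t ^ 4 * a1 ^ 2 - t ^ 2 - t ^ 2 * a2)
      + 2 * t ^ 4 * a1 * a2 * x ^ 2 + t ^ 4 * a2 ^ 2 * x ^ 3) * (1 + y) ^ 3 * t * x ^ 2
      - (1 - t ^ 2 * (1 + y) * (c + y * b1 + b1)) * (1 + y) * y * ((1 + y) * t ^ 2 + x * (t * (y * (1 - t ^ 2 * (1 + y) * (c + y * b1 + b1))) - (t + t ^ 3 * c) * (1 + y))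
              + (1 + y) * t ^ 3 * x ^ 2 * (a1 + x * a2)))) * FE

/-! ### Consequences of the cubic equation at critical points -/

section CriticalPoints

lemma two_ne_zero_powerSeries : (2 : PowerSeries ℚ) ≠ 0 := by
  intro h
  have := congrArg PowerSeries.constantCoeff h
  rw [map_ofNat, map_zero] at this
  norm_num at this

/-- Comparison of the invariant equation at `x` and at a point `r` with `r ^ 2 = 1`, divided by
`x - r`. At `x = r` the cofactor becomes `v₂ - r * v₁` times a derivative of the equation. -/
lemma quotient_at_sign {R : Type*} [CommRing R] [IsDomain R] (x r t v1 v2 B C A : R)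
    (hr : r ^ 2 = 1) (hx : x - r ≠ 0)
    (h : t * ((t * (x ^ 3 + x) - t ^ 2 * (x ^ 2 - 1) ^ 2 + t ^ 2 * (v1 + (x - r) * v2) ^ 2
        - B * x * (v1 + (x - r) * v2) - C * x ^ 2) * (v1 + (x - r) * v2)) = A * x ^ 3)
    (h1 : t * ((2 * r * t + t ^ 2 * v1 ^ 2 - B * r * v1 - C) * v1) = A * r) :
    t * (v2 * (t * (x ^ 3 + x) - t ^ 2 * (x ^ 2 - 1) ^ 2 - C * x ^ 2
        + t ^ 2 * ((v1 + (x - r) * v2) ^ 2 + (v1 + (x - r) * v2) * v1 + v1 ^ 2)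
        - B * x * ((v1 + (x - r) * v2) + v1))
      + (t * (x ^ 2 + r * x + 2) - t ^ 2 * (x - r) * (x + r) ^ 2 - B * v1 - C * (x + r)) * v1)
      = A * (x ^ 2 + r * x + 1) := by
  have e : x ^ 2 - 1 = (x - r) * (x + r) := by linear_combination hr
  rw [e] at h ⊢
  refine mul_left_cancel₀ hx ?_
  linear_combination h - h1 + (C * v1 * t + x * A - x * t ^ 2 * v1) * hr

/-- Comparison of the invariant equation at `y` and at `1`, divided by `y - 1`. At `y = 1` the
cofactor becomes a multiple of `2 * l2 - l` times a derivative of the equation. -/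
lemma quotient_at_one {R : Type*} [CommRing R] [IsDomain R] (y t l l2 β C A : R)
    (hy : y - 1 ≠ 0)
    (h : (l + (y - 1) * l2) * (y ^ 2 + t ^ 2 * (1 + y) ^ 4 + y * (l + (y - 1) * l2) ^ 2
        - β * y * (l + (y - 1) * l2) * (1 + y) - C * y * (1 + y) ^ 2) = A * y * (1 + y) ^ 3)
    (h1 : l * (1 + 16 * t ^ 2 + l ^ 2 - 2 * β * l - 4 * C) = 8 * A) :
    l2 * (y ^ 2 + t ^ 2 * (1 + y) ^ 4 - C * y * (1 + y) ^ 2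
        + y * ((l + (y - 1) * l2) ^ 2 + (l + (y - 1) * l2) * l + l ^ 2)
        - β * y * (1 + y) * ((l + (y - 1) * l2) + l))
      + l * ((y + 1) + t ^ 2 * ((1 + y) ^ 2 + 4) * (y + 3) + l ^ 2 - β * l * (y + 2)
        - C * (y ^ 2 + 3 * y + 4))
      = A * (y ^ 3 + 4 * y ^ 2 + 7 * y + 8) := by
  refine mul_left_cancel₀ hy ?_
  linear_combination h - h1

/-- Elimination of `A`, `β`, `C` from the three critical-point conditions. The value of the cubic
and of its derivative at a double root `z` give `A = z ^ 2 * (β - 2 * z)`, so that the three numbers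
`V = 2 * z₁`, `U = 2 * z₂`, `l = 2 * z₃` are the roots of `Z ^ 3 - β * Z ^ 2 + 4 * A`, and Vieta's
formulas apply. -/
lemma critical_relations {T : Type*} [CommRing T] [IsDomain T] (t β C A u1 u2 l V U : T)
    (hV : V = 2 * t * u1) (hU : U = 2 * t * u2)
    (h1A : A = t * ((2 * t + t ^ 2 * u1 ^ 2 - t * β * u1 - C) * u1))
    (h1 : 2 * t + 3 * t ^ 2 * u1 ^ 2 - 2 * t * β * u1 - C = 0)
    (h2A : A = t * ((-2 * t + t ^ 2 * u2 ^ 2 - t * β * u2 - C) * u2))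
    (h2 : -2 * t + 3 * t ^ 2 * u2 ^ 2 - 2 * t * β * u2 - C = 0)
    (h3A : l * (1 + 16 * t ^ 2 + l ^ 2 - 2 * β * l - 4 * C) = 8 * A)
    (h3 : 1 + 16 * t ^ 2 + 3 * l ^ 2 - 4 * β * l - 4 * C = 0)
    (h2ne : (2 : T) ≠ 0) (hVU : V - U ≠ 0) (hVl : V - l ≠ 0) (hUl : U - l ≠ 0) :
    U * V + U * l + V * l = 0 ∧ 16 * t = (V - U) * (V + U + 4 * l) ∧
      (1 - 4 * t) ^ 2 = (l - V) * (V + l + 4 * U) := by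
  have a1 : 4 * A = V ^ 2 * (β - V) := by
    rw [hV]; linear_combination 4 * h1A + 4 * t * u1 * h1
  have a2 : 4 * A = U ^ 2 * (β - U) := by
    rw [hU]; linear_combination 4 * h2A + 4 * t * u2 * h2
  have a3 : 4 * A = l ^ 2 * (β - l) := by
    refine mul_left_cancel₀ h2ne ?_
    linear_combination l * h3 - h3A
  have b1 : β * (V + l) = V ^ 2 + V * l + l ^ 2 := by
    refine mul_left_cancel₀ hVl ?_
    linear_combination a3 - a1
  have b2 : β * (U + l) = U ^ 2 + U * l + l ^ 2 := by
    refine mul_left_cancel₀ hUl ?_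
    linear_combination a3 - a2
  have b : β = V + U + l := by
    refine mul_left_cancel₀ hVU ?_
    linear_combination b1 - b2
  have c1 : 4 * C = 8 * t + 3 * V ^ 2 - 4 * β * V := by
    rw [hV]; linear_combination -4 * h1
  have c2 : 4 * C = -8 * t + 3 * U ^ 2 - 4 * β * U := by
    rw [hU]; linear_combination -4 * h2
  subst b
  refine ⟨?_, ?_, ?_⟩
  · linear_combination b1
  · linear_combination c2 - c1
  · linear_combination h3 + c1

end CriticalPoints

/-! ### Elimination -/

section Algebraicity

/-- The relations between the critical values of the invariant force algebraicity: the ratio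
`lam = U / V` is a root of an explicit polynomial with coefficients in `ℚ[t]`, and `V ^ 2`, `l` and
`G` are rational in `t`, `lam` and `V`. -/
lemma algebraic_of_relations (v u l lam V U G : PowerSeries ℚ)
    (hV : V = 2 * PowerSeries.X * v) (hU : U = 2 * PowerSeries.X * u) (hlam : u = lam * v)
    (hv : PowerSeries.constantCoeff v = 1) (hu : PowerSeries.constantCoeff lam = -1)
    (h1 : U * V + U * l + V * l = 0)
    (h2 : 16 * PowerSeries.X = (V - U) * (V + U + 4 * l))
    (h3 : (1 - 4 * PowerSeries.X) ^ 2 = (l - V) * (V + l + 4 * U))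
    (hG : 2 * PowerSeries.X * (1 - 4 * PowerSeries.X) * G = 4 * PowerSeries.X - V - 1 + l) :
    IsAlgebraic (Polynomial ℚ) G := by
  have hX : IsAlgebraic (Polynomial ℚ) (PowerSeries.X : PowerSeries ℚ) := by
    have := isAlgebraic_algebraMap (A := PowerSeries ℚ) (Polynomial.X : Polynomial ℚ)
    simpa [PowerSeries.algebraMap_apply'] using this
  have hn : ∀ n : ℕ, IsAlgebraic (Polynomial ℚ) (n : PowerSeries ℚ) := fun n => by
    simpa using isAlgebraic_algebraMap (A := PowerSeries ℚ) (n : Polynomial ℚ)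
  have h_one : IsAlgebraic (Polynomial ℚ) (1 : PowerSeries ℚ) := by simpa using hn 1
  have h_two : IsAlgebraic (Polynomial ℚ) (2 : PowerSeries ℚ) := by simpa using hn 2
  have h_four : IsAlgebraic (Polynomial ℚ) (4 : PowerSeries ℚ) := by simpa using hn 4
  have h_sixteen : IsAlgebraic (Polynomial ℚ) (16 : PowerSeries ℚ) := by simpa using hn 16
  have v0 : v ≠ 0 := by rintro rfl; simp at hv
  have V0 : V ≠ 0 := by
    rw [hV]; exact mul_ne_zero (mul_ne_zero two_ne_zero_powerSeries PowerSeries.X_ne_zero) v0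
  have hUV : U = lam * V := by rw [hU, hV, hlam]; ring
  have e1 : l * (1 + lam) = -(lam * V) := by
    refine mul_left_cancel₀ V0 ?_
    rw [hUV] at h1
    linear_combination h1
  have lam0 : lam ≠ 0 := by rintro rfl; simp at hu
  have hp : 1 + lam ≠ 0 := by
    intro h0
    rw [h0, mul_zero] at e1
    exact mul_ne_zero lam0 V0 (neg_eq_zero.1 e1.symm)
  have hm : 1 - lam ≠ 0 := by
    intro h0
    have := congrArg PowerSeries.constantCoeff h0
    rw [map_sub, hu] at this
    norm_num at this
  have e2 : 16 * PowerSeries.X * (1 + lam) = V ^ 2 * (1 - lam) ^ 3 := by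
    rw [h2, hUV]
    linear_combination 4 * (V - lam * V) * e1
  have e3 : (1 - 4 * PowerSeries.X) ^ 2 * (1 + lam) ^ 2 = -(V ^ 2 * (1 + 2 * lam) ^ 3) := by
    rw [h3, hUV]
    linear_combination (l * (1 + lam) + 4 * lam * V * (1 + lam) - lam * V) * e1
  have hlamalg : IsAlgebraic (Polynomial ℚ) lam := by
    refine ⟨Polynomial.C (16 * Polynomial.X) * (1 + Polynomial.X) * (1 + 2 * Polynomial.X) ^ 3
      + Polynomial.C ((1 - 4 * Polynomial.X) ^ 2) * (1 + Polynomial.X) ^ 2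
        * (1 - Polynomial.X) ^ 3, ?_, ?_⟩
    · intro h0
      have := congrArg (fun p => Polynomial.eval 0 (Polynomial.eval 0 p)) h0
      simp at this
    · have : algebraMap (Polynomial ℚ) (PowerSeries ℚ) Polynomial.X = PowerSeries.X := by
        simp [PowerSeries.algebraMap_apply']
      simp only [map_add, map_mul, map_pow, map_sub, map_one, map_ofNat, Polynomial.aeval_X,
        Polynomial.aeval_C, this]
      linear_combination (1 + 2 * lam) ^ 3 * e2 + (1 - lam) ^ 3 * e3
  have hV2 : IsAlgebraic (Polynomial ℚ) (V ^ 2) := by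
    refine IsAlgebraic.of_mul (mem_nonZeroDivisors_of_ne_zero (pow_ne_zero 3 hm))
      ((h_one.sub hlamalg).pow 3) ?_
    rw [mul_comm, ← e2]
    exact (h_sixteen.mul hX).mul (h_one.add hlamalg)
  have hValg : IsAlgebraic (Polynomial ℚ) V := hV2.of_pow two_pos
  have hlalg : IsAlgebraic (Polynomial ℚ) l := by
    refine IsAlgebraic.of_mul (mem_nonZeroDivisors_of_ne_zero hp) (h_one.add hlamalg) ?_
    rw [mul_comm, e1]
    exact (hlamalg.mul hValg).neg
  have h14 : (1 - 4 * PowerSeries.X : PowerSeries ℚ) ≠ 0 := by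
    intro h0
    simpa using congrArg PowerSeries.constantCoeff h0
  refine IsAlgebraic.of_mul (mem_nonZeroDivisors_of_ne_zero
    (mul_ne_zero (mul_ne_zero two_ne_zero_powerSeries PowerSeries.X_ne_zero) h14))
    ((h_two.mul hX).mul (h_one.sub (h_four.mul hX))) ?_
  rw [hG]
  exact (((h_four.mul hX).sub hValg).sub h_one).add hlalg

end Algebraicity

/-! ### Critical points of the invariants, and the conclusion -/

section Assembly

/-- The invariants `I = t * v / x` and `J = j / (1 + y)` satisfy
`(I₀ + I ^ 2 - β * I - C) * I = A` and `(J₀ + J ^ 2 - β * J - C) * J = A` with the same series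
`β`, `C`, `A` in `t` alone. Denominators are cleared in both equations. -/
lemma invariant_equations :
    ∃ (β C A : PowerSeries ℚ),
      (∀ v x : PowerSeries (Polynomial ℚ), x = PowerSeries.C Polynomial.X →
        v = 1 + PowerSeries.X * (x * gfX) →
        PowerSeries.X * ((PowerSeries.X * (x ^ 3 + x) - PowerSeries.X ^ 2 * (x ^ 2 - 1) ^ 2
            + PowerSeries.X ^ 2 * v ^ 2
            - PowerSeries.map Polynomial.C (PowerSeries.X * β) * x * v
            - PowerSeries.map Polynomial.C C * x ^ 2) * v)
          = PowerSeries.map Polynomial.C A * x ^ 3) ∧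
      (∀ j y : PowerSeries (Polynomial ℚ), y = PowerSeries.C Polynomial.X →
        j = y - PowerSeries.X * ((1 + y) * (PowerSeries.X * (1 + y) * gfY
          - PowerSeries.X * PowerSeries.map Polynomial.C gf00)) →
        j * (y ^ 2 + PowerSeries.X ^ 2 * (1 + y) ^ 4 + y * j ^ 2
            - PowerSeries.map Polynomial.C β * y * j * (1 + y)
            - PowerSeries.map Polynomial.C C * y * (1 + y) ^ 2)
          = PowerSeries.map Polynomial.C A * y * (1 + y) ^ 3) := by
  obtain ⟨α, hα⟩ := exists_eq_eval_add_mul 0 gfX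
  obtain ⟨a2, ha2⟩ := exists_eq_eval_add_mul 0 α
  obtain ⟨b1, hb1⟩ := exists_eq_eval_add_mul 0 gfY
  obtain ⟨q1, hq1⟩ := exists_eq_eval_add_mul 0 walkGF
  rw [gf00_eq] at hα
  change gfY = PowerSeries.map Polynomial.C gf00 + _ at hb1
  change walkGF = PowerSeries.map inclY gfY + _ at hq1
  generalize PowerSeries.map (Polynomial.evalRingHom 0) α = a1 at ha2
  rw [Polynomial.C_0, sub_zero] at hα ha2 hb1 hq1
  have iX : ∀ u : PowerSeries ℚ, PowerSeries.map inclX (PowerSeries.map Polynomial.C u)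
      = PowerSeries.map inclQ u := by
    intro u
    ext1 n
    simp [inclX, inclQ]
  have iY : ∀ u : PowerSeries ℚ, PowerSeries.map inclY (PowerSeries.map Polynomial.C u)
      = PowerSeries.map inclQ u := by
    intro u
    ext1 n
    simp [inclY, inclQ]
  have iXx : inclX Polynomial.X = Polynomial.X := by simp [inclX]
  have gX : PowerSeries.map inclX gfX = PowerSeries.map inclQ gf00 + PowerSeries.C Polynomial.X
      * (PowerSeries.map inclQ a1 + PowerSeries.C Polynomial.X * PowerSeries.map inclX a2) := by
    rw [hα, ha2]
    simp only [map_add, map_mul, iX, PowerSeries.map_C, iXx]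
  have gY : PowerSeries.map inclY gfY = PowerSeries.map inclQ gf00
      + PowerSeries.C (inclY Polynomial.X) * PowerSeries.map inclY b1 := by
    rw [hb1]
    simp only [map_add, map_mul, iY, PowerSeries.map_C]
  have x0 : (PowerSeries.C Polynomial.X : PowerSeries (Polynomial (Polynomial ℚ))) ≠ 0 := by
    intro h
    have := congrArg PowerSeries.constantCoeff h
    simp at this
  have FE := functional_equation
  rw [hq1, gX, gY] at FE
  simp only [map_mul, map_add, map_pow, map_one] at FE
  have K := kernel_factor (PowerSeries.C Polynomial.X) (PowerSeries.C (inclY Polynomial.X))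
    PowerSeries.X (PowerSeries.map inclQ gf00) (PowerSeries.map inclQ a1)
    (PowerSeries.map inclX a2) (PowerSeries.map inclY b1) q1
    (by
      refine mul_left_cancel₀ x0 ?_
      linear_combination FE) _ _ _ rfl rfl rfl
  -- The constant `C`, and the quotients `m` and `j'` of the numerators by `x ^ 3` and `y`.
  let c := PowerSeries.map (Polynomial.C : ℚ →+* Polynomial ℚ) gf00
  let d := PowerSeries.map (Polynomial.C : ℚ →+* Polynomial ℚ) a1
  let z : PowerSeries (Polynomial ℚ) := PowerSeries.C Polynomial.X
  let t : PowerSeries (Polynomial ℚ) := PowerSeries.X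
  let C0 : PowerSeries ℚ := 2 * PowerSeries.X ^ 2 + PowerSeries.X ^ 2 *
    (PowerSeries.X ^ 2 * gf00 ^ 2 + 2 * PowerSeries.X * a1)
    - (PowerSeries.X + 2 * PowerSeries.X ^ 3 * gf00) * (PowerSeries.X * gf00)
  let CC := PowerSeries.map (Polynomial.C : ℚ →+* Polynomial ℚ) C0
  let m := t + 2 * t ^ 3 * a2 - t ^ 2 * d + z * (t ^ 4 * d ^ 2 - t ^ 2 - t ^ 2 * a2)
      + 2 * t ^ 4 * d * a2 * z ^ 2 + t ^ 4 * a2 ^ 2 * z ^ 3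
  let j' := 1 - t ^ 2 * (1 + z) * (c + z * b1 + b1)
  obtain ⟨A, hA1, hA2⟩ := invariant_lemma (t * (m * (1 + t * z * (c + z * (d + z * a2)))))
    (j' * (z ^ 2 + t ^ 2 * (1 + z) ^ 4 + z * (z * j') ^ 2
        - (1 + 2 * t ^ 2 * c) * z * (z * j') * (1 + z) - CC * z * (1 + z) ^ 2))
    (Polynomial.X ^ 2 * inclY Polynomial.X
            + Polynomial.X ^ 2 * inclY Polynomial.X ^ 2 + inclY Polynomial.X + 1) _ (by
      simp only [m, j', CC, C0, c, d, z, t, map_mul, map_add, map_sub, map_pow, map_one,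
        map_ofNat, iX, iY, PowerSeries.map_C, PowerSeries.map_X, iXx]
      exact K)
  have hCC : CC = 2 * t ^ 2 + t ^ 2 * (t ^ 2 * c ^ 2 + 2 * t * d)
      - (t + 2 * t ^ 3 * c) * (t * c) := by
    simp only [CC, C0, c, d, t, map_mul, map_add, map_sub, map_pow, map_ofNat, PowerSeries.map_X]
  refine ⟨1 + 2 * PowerSeries.X ^ 2 * gf00, C0, A, ?_, ?_⟩
  · rintro v x rfl rfl
    have hm : m * z ^ 3 = t * (z ^ 3 + z) - t ^ 2 * (z ^ 2 - 1) ^ 2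
        + t ^ 2 * (1 + t * z * (c + z * (d + z * a2))) ^ 2
        - (t + 2 * t ^ 3 * c) * z * (1 + t * z * (c + z * (d + z * a2))) - CC * z ^ 2 := by
      rw [hCC]
      simp only [m]
      ring
    have hg : gfX = c + z * (d + z * a2) := by rw [hα, ha2]
    rw [hg, ← hA1]
    simp only [map_mul, map_add, map_pow, map_one, map_ofNat, PowerSeries.map_X]
    change t * ((t * (z ^ 3 + z) - t ^ 2 * (z ^ 2 - 1) ^ 2
      + t ^ 2 * (1 + t * (z * (c + z * (d + z * a2)))) ^ 2
      - t * (1 + 2 * t ^ 2 * c) * z * (1 + t * (z * (c + z * (d + z * a2))))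
      - CC * z ^ 2) * (1 + t * (z * (c + z * (d + z * a2))))) = _
    linear_combination -t * (1 + t * (z * (c + z * (d + z * a2)))) * hm
  · rintro j y rfl rfl
    have hj : z - t * ((1 + z) * (t * (1 + z) * gfY - t * c)) = z * j' := by
      rw [hb1]
      change z - t * ((1 + z) * (t * (1 + z) * (c + z * b1) - t * c)) = _
      simp only [j']
      ring
    simp only [map_mul, map_add, map_pow, map_one, map_ofNat, PowerSeries.map_X]
    change (z - t * ((1 + z) * (t * (1 + z) * gfY - t * c))) *
      (z ^ 2 + t ^ 2 * (1 + z) ^ 4 + z * (z - t * ((1 + z) * (t * (1 + z) * gfY - t * c))) ^ 2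
        - (1 + 2 * t ^ 2 * c) * z * (z - t * ((1 + z) * (t * (1 + z) * gfY - t * c))) * (1 + z)
        - CC * z * (1 + z) ^ 2) = _ * z * (1 + z) ^ 3
    simp only [map_pow, map_add, map_one] at hA2
    change _ = (1 + z) ^ 3 * _ at hA2
    rw [hj]
    linear_combination z * hA2

/-- Evaluation at `r` of the coefficients of a series over `ℚ[x]`. -/
abbrev evalAt (r : ℚ) : PowerSeries (Polynomial ℚ) →+* PowerSeries ℚ :=
  PowerSeries.map (Polynomial.evalRingHom r)

lemma evalAt_map_C (r : ℚ) (u : PowerSeries ℚ) :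
    evalAt r (PowerSeries.map Polynomial.C u) = u := by
  ext n
  simp

lemma C_sub_C_ne_zero (r : ℚ) :
    (PowerSeries.C Polynomial.X - PowerSeries.C (Polynomial.C r) :
      PowerSeries (Polynomial ℚ)) ≠ 0 := by
  intro h
  have := congrArg PowerSeries.constantCoeff h
  simp only [map_sub, PowerSeries.constantCoeff_C, map_zero] at this
  exact Polynomial.X_sub_C_ne_zero r this

/-- At `x = r = ±1` the derivative of `I₀` vanishes, so differentiating the cubic equation in `x`
shows that `I(r)` is a double root. The nonzero factor cancelled at the end represents the
derivative of `I` at `r`. The last two conclusions are the equation and its derivative. -/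
lemma critical_at_sign (r : ℚ) (hr : r ^ 2 = 1) (β C A : PowerSeries ℚ)
    (hI : ∀ v x : PowerSeries (Polynomial ℚ), x = PowerSeries.C Polynomial.X →
        v = 1 + PowerSeries.X * (x * gfX) →
        PowerSeries.X * ((PowerSeries.X * (x ^ 3 + x) - PowerSeries.X ^ 2 * (x ^ 2 - 1) ^ 2
            + PowerSeries.X ^ 2 * v ^ 2
            - PowerSeries.map Polynomial.C (PowerSeries.X * β) * x * v
            - PowerSeries.map Polynomial.C C * x ^ 2) * v)
          = PowerSeries.map Polynomial.C A * x ^ 3) :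
    ∃ v : PowerSeries ℚ,
      v = 1 + PowerSeries.X * (PowerSeries.C r * evalAt r gfX) ∧
      PowerSeries.X * ((2 * PowerSeries.C r * PowerSeries.X + PowerSeries.X ^ 2 * v ^ 2
        - (PowerSeries.X * β) * PowerSeries.C r * v - C) * v) = A * PowerSeries.C r ∧
      2 * PowerSeries.C r * PowerSeries.X + 3 * PowerSeries.X ^ 2 * v ^ 2
        - 2 * (PowerSeries.X * β) * PowerSeries.C r * v - C = 0 := by
  obtain ⟨s', hs'⟩ := exists_eq_eval_add_mul r (PowerSeries.C Polynomial.X * gfX)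
  have hI := hI _ _ rfl rfl
  have hev : PowerSeries.map (Polynomial.evalRingHom r) (PowerSeries.C Polynomial.X * gfX)
      = PowerSeries.C r * evalAt r gfX := by simp
  rw [hev] at hs'
  have hrT : (PowerSeries.C r : PowerSeries ℚ) ^ 2 = 1 := by rw [← map_pow, hr, map_one]
  have hrP : (PowerSeries.C (Polynomial.C r) : PowerSeries (Polynomial ℚ)) ^ 2 = 1 := by
    rw [← map_pow, ← map_pow, hr, map_one, map_one]
  set v1 := 1 + PowerSeries.X * (PowerSeries.C r * evalAt r gfX) with hv1
  have hA : PowerSeries.X * ((2 * PowerSeries.C r * PowerSeries.X + PowerSeries.X ^ 2 * v1 ^ 2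
        - (PowerSeries.X * β) * PowerSeries.C r * v1 - C) * v1) = A * PowerSeries.C r := by
    have := congrArg (evalAt r) hI
    simp only [map_mul, map_add, map_sub, map_pow, map_one, evalAt_map_C, PowerSeries.map_X,
      PowerSeries.map_C, Polynomial.coe_evalRingHom, Polynomial.eval_X] at this
    rw [← hv1] at this
    linear_combination this + (PowerSeries.X * v1 * (C - PowerSeries.X * PowerSeries.C r
      + PowerSeries.X ^ 2 * (PowerSeries.C r ^ 2 - 1)) + A * PowerSeries.C r) * hrT
  refine ⟨v1, rfl, hA, ?_⟩
  have hv : 1 + PowerSeries.X * (PowerSeries.C Polynomial.X * gfX)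
      = PowerSeries.map Polynomial.C v1
        + (PowerSeries.C Polynomial.X - PowerSeries.C (Polynomial.C r)) * (PowerSeries.X * s') := by
    rw [hs', hv1]
    simp only [map_add, map_mul, map_sub, map_one, PowerSeries.map_X, PowerSeries.map_C]
    ring
  rw [hv] at hI
  have hA' := congrArg (PowerSeries.map (Polynomial.C : ℚ →+* Polynomial ℚ)) hA
  simp only [map_mul, map_add, map_sub, map_pow, map_ofNat, PowerSeries.map_X,
    PowerSeries.map_C] at hA' hI
  have Q := quotient_at_sign _ _ _ _ _ _ _ _ hrP (C_sub_C_ne_zero r) hI hA'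
  have Q := congrArg (evalAt r) Q
  simp only [map_mul, map_add, map_sub, map_pow, map_one, map_ofNat, evalAt_map_C,
    PowerSeries.map_X, PowerSeries.map_C, Polynomial.coe_evalRingHom, Polynomial.eval_X,
    Polynomial.eval_C] at Q
  have hne : PowerSeries.X * (PowerSeries.X * evalAt r s' - PowerSeries.C r * v1) ≠ 0 := by
    refine mul_ne_zero PowerSeries.X_ne_zero fun h0 => ?_
    have := congrArg PowerSeries.constantCoeff h0
    simp [hv1] at this
    simp [this] at hr
  refine mul_left_cancel₀ hne ?_
  linear_combination Q - 3 * PowerSeries.C r * hA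
    + (PowerSeries.X * (PowerSeries.X * evalAt r s') * (C - PowerSeries.X * PowerSeries.C r
        + PowerSeries.X ^ 2 * (PowerSeries.C r ^ 2 - 1))
      + PowerSeries.X * v1 * (2 * PowerSeries.X - PowerSeries.X * β * v1) - A) * hrT

/-- The analogue of `critical_at_sign` for `J` at `y = 1`, where the derivative of
`y / (1 + y) ^ 2`, hence that of `J₀`, vanishes; `l` is `j(1) = 2 * J(1)`. -/
lemma critical_at_one (β C A : PowerSeries ℚ)
    (hJ : ∀ j y : PowerSeries (Polynomial ℚ), y = PowerSeries.C Polynomial.X →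
        j = y - PowerSeries.X * ((1 + y) * (PowerSeries.X * (1 + y) * gfY
          - PowerSeries.X * PowerSeries.map Polynomial.C gf00)) →
        j * (y ^ 2 + PowerSeries.X ^ 2 * (1 + y) ^ 4 + y * j ^ 2
            - PowerSeries.map Polynomial.C β * y * j * (1 + y)
            - PowerSeries.map Polynomial.C C * y * (1 + y) ^ 2)
          = PowerSeries.map Polynomial.C A * y * (1 + y) ^ 3) :
    ∃ l : PowerSeries ℚ,
      l = 1 - PowerSeries.X * (2 * (PowerSeries.X * 2 * evalAt 1 gfY - PowerSeries.X * gf00)) ∧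
      l * (1 + 16 * PowerSeries.X ^ 2 + l ^ 2 - 2 * β * l - 4 * C) = 8 * A ∧
      1 + 16 * PowerSeries.X ^ 2 + 3 * l ^ 2 - 4 * β * l - 4 * C = 0 := by
  obtain ⟨s', hs'⟩ := exists_eq_eval_add_mul 1 ((1 + PowerSeries.C Polynomial.X)
    * (PowerSeries.X * (1 + PowerSeries.C Polynomial.X) * gfY
      - PowerSeries.X * PowerSeries.map Polynomial.C gf00))
  have hJ := hJ _ _ rfl rfl
  have hev : evalAt 1 ((1 + PowerSeries.C Polynomial.X)
      * (PowerSeries.X * (1 + PowerSeries.C Polynomial.X) * gfY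
        - PowerSeries.X * PowerSeries.map Polynomial.C gf00))
      = 2 * (PowerSeries.X * 2 * evalAt 1 gfY - PowerSeries.X * gf00) := by
    simp only [map_mul, map_add, map_sub, map_one, evalAt_map_C, PowerSeries.map_X,
      PowerSeries.map_C, Polynomial.coe_evalRingHom, Polynomial.eval_X]
    ring
  rw [hev] at hs'
  obtain ⟨l, hl⟩ : ∃ l : PowerSeries ℚ, l = 1 - PowerSeries.X *
    (2 * (PowerSeries.X * 2 * evalAt 1 gfY - PowerSeries.X * gf00)) := ⟨_, rfl⟩
  have hj : PowerSeries.C Polynomial.X - PowerSeries.X * ((1 + PowerSeries.C Polynomial.X)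
      * (PowerSeries.X * (1 + PowerSeries.C Polynomial.X) * gfY
        - PowerSeries.X * PowerSeries.map Polynomial.C gf00))
      = PowerSeries.map Polynomial.C l
        + (PowerSeries.C Polynomial.X - 1) * (1 - PowerSeries.X * s') := by
    rw [hs', hl]
    simp only [map_mul, map_sub, map_one, PowerSeries.map_X, map_ofNat]
    ring
  rw [hj] at hJ
  have hlA : l * (1 + 16 * PowerSeries.X ^ 2 + l ^ 2 - 2 * β * l - 4 * C) = 8 * A := by
    have := congrArg (evalAt 1) hJ
    simp only [map_mul, map_add, map_sub, map_pow, map_one, evalAt_map_C, PowerSeries.map_X,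
      PowerSeries.map_C, Polynomial.coe_evalRingHom, Polynomial.eval_X] at this
    linear_combination this
  refine ⟨l, hl, hlA, ?_⟩
  have hlA' := congrArg (PowerSeries.map (Polynomial.C : ℚ →+* Polynomial ℚ)) hlA
  simp only [map_mul, map_add, map_sub, map_pow, map_ofNat, map_one, PowerSeries.map_X] at hlA'
  have hy : (PowerSeries.C Polynomial.X - 1 : PowerSeries (Polynomial ℚ)) ≠ 0 := by
    simpa using C_sub_C_ne_zero 1
  have Q := congrArg (evalAt 1) (quotient_at_one _ _ _ _ _ _ _ hy hJ hlA')
  simp only [map_mul, map_add, map_sub, map_pow, map_one, map_ofNat, evalAt_map_C,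
    PowerSeries.map_X, PowerSeries.map_C, Polynomial.coe_evalRingHom, Polynomial.eval_X] at Q
  have hne : 2 * (1 - PowerSeries.X * evalAt 1 s') - l ≠ 0 := by
    intro h0
    have := congrArg PowerSeries.constantCoeff h0
    rw [hl] at this
    simp [map_ofNat] at this
    norm_num at this
  refine mul_left_cancel₀ hne ?_
  linear_combination 2 * Q - 5 * hlA

/-- The functional equation at `x = y = 1`. -/
lemma functional_equation_at_one :
    GesselGF11 = 1 + PowerSeries.X *
      (4 * GesselGF11 - 2 * evalAt 1 gfY - evalAt 1 gfX + gf00) := by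
  let φ : PowerSeries (Polynomial (Polynomial ℚ)) →+* PowerSeries ℚ :=
    PowerSeries.map ((Polynomial.evalRingHom 1).comp (Polynomial.evalRingHom 1))
  have hG : φ walkGF = GesselGF11 := by
    ext n
    simp [φ, walkGF, GesselGF11, walkPoly_eval_one]
  have hX : φ (PowerSeries.map inclX gfX) = evalAt 1 gfX := by
    have : ((Polynomial.evalRingHom 1).comp (Polynomial.evalRingHom 1)).comp inclX
        = Polynomial.evalRingHom (1 : ℚ) := by
      ext <;> simp [inclX]
    ext n
    simpa [φ] using congrArg (fun F => F (PowerSeries.coeff n gfX)) this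
  have hY : φ (PowerSeries.map inclY gfY) = evalAt 1 gfY := by
    ext n
    simp [φ, inclY]
  have hQ : φ (PowerSeries.map inclQ gf00) = gf00 := by
    ext n
    simp [φ, inclQ]
  have := congrArg φ functional_equation
  simp only [map_mul, map_add, map_sub, hG, hX, hY, hQ] at this
  simp only [φ, PowerSeries.map_C, PowerSeries.map_X, inclY, map_pow, map_one,
    RingHom.comp_apply, Polynomial.coe_evalRingHom, Polynomial.eval_X, Polynomial.eval_C] at this
  linear_combination this

lemma isAlgebraic_gesselGF11 : IsAlgebraic (Polynomial ℚ) GesselGF11 := by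
  obtain ⟨β, C, A, hI, hJ⟩ := invariant_equations
  obtain ⟨u1, hu1, h1A, h1⟩ := critical_at_sign 1 (by norm_num) β C A hI
  obtain ⟨w, hw, h2A, h2⟩ := critical_at_sign (-1) (by norm_num) β C A hI
  obtain ⟨l, hl, h3A, h3⟩ := critical_at_one β C A hJ
  rw [map_neg] at h2A h2 hw
  rw [map_one] at h1A h1 h2A h2 hu1 hw
  have c1 : PowerSeries.constantCoeff u1 = 1 := by rw [hu1]; simp
  have cw : PowerSeries.constantCoeff w = 1 := by rw [hw]; simp
  have cl : PowerSeries.constantCoeff l = 1 := by rw [hl]; simp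
  have hinv : u1⁻¹ * u1 = 1 := PowerSeries.inv_mul_cancel _ (by rw [c1]; exact one_ne_zero)
  have cinv : PowerSeries.constantCoeff u1⁻¹ = 1 := by
    simp [c1]
  have hVU : 2 * PowerSeries.X * u1 - 2 * PowerSeries.X * -w ≠ 0 := by
    have : 2 * PowerSeries.X * (u1 + w) ≠ 0 := by
      refine mul_ne_zero (mul_ne_zero two_ne_zero_powerSeries PowerSeries.X_ne_zero) fun h0 => ?_
      have := congrArg PowerSeries.constantCoeff h0
      rw [map_add, c1, cw] at this
      norm_num at this
    intro h0
    exact this (by linear_combination h0)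
  have hVl : ∀ u : PowerSeries ℚ, 2 * PowerSeries.X * u - l ≠ 0 := by
    intro u h0
    have := congrArg PowerSeries.constantCoeff h0
    simp [cl] at this
  obtain ⟨r1, r2, r3⟩ := critical_relations PowerSeries.X β C A u1 (-w) l _ _ rfl rfl
    (by linear_combination -h1A) (by linear_combination h1)
    (by linear_combination h2A) (by linear_combination h2)
    h3A h3 two_ne_zero_powerSeries hVU (hVl _) (hVl _)
  refine algebraic_of_relations u1 (-w) l (-w * u1⁻¹) _ _ GesselGF11 rfl rfl
    (by linear_combination w * hinv) c1 (by simp [cw, cinv]) r1 r2 r3 ?_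
  rw [hl, hu1]
  linear_combination 2 * PowerSeries.X * functional_equation_at_one

end Assembly

/-- `G(t;1,1)` is algebraic. -/
theorem gesselGF11_algebraic :
    ∃ P : Polynomial (Polynomial ℚ), P ≠ 0 ∧
      Polynomial.eval₂ Polynomial.coeToPowerSeries.ringHom GesselGF11 P = 0 := by
  obtain ⟨P, hP, h0⟩ := isAlgebraic_gesselGF11
  refine ⟨P, hP, ?_⟩
  have : algebraMap (Polynomial ℚ) (PowerSeries ℚ) = Polynomial.coeToPowerSeries.ringHom := by
    ext <;> simp [PowerSeries.algebraMap_apply']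
  rw [← this]
  exact h0
end
end
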